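/- For every integer k ≥ 2 there exists a constant C_k < ∞ such that for every δ ∈ (0, 1], the Lebesgue measure of the level set satisfies |{x ∈ ℝ^N : δ ≤ |E_k1(x)| ≤ 2δ}| ≤ C_k · (log₊ δ)^{k−1} · δ^{−q_k}. -/

import Mathlib

open MeasureTheory Real Set
open scoped ENNReal

noncomputable section

/-- Index set for multi-indices `β = (β₁, β₂) ∈ ℕ²` with `1 ≤ β₁ + β₂ ≤ k`;
its cardinality is `N = (k+1)(k+2)/2 − 1`. -/
def Idx (k : ℕ) : Type :=
  {β : Fin (k + 1) × Fin (k + 1) // 1 ≤ (β.1 : ℕ) + (β.2 : ℕ) ∧ (β.1 : ℕ) + (β.2 : ℕ) ≤ k}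

instance (k : ℕ) : Fintype (Idx k) := by unfold Idx; infer_instance

/-- The phase polynomial `P(ξ; x) = ∑_{1 ≤ |β| ≤ k} x_β ξ₁^{β₁} ξ₂^{β₂}`. -/
def Pphase (k : ℕ) (x : Idx k → ℝ) (ξ : Fin 2 → ℝ) : ℝ :=
  ∑ β : Idx k, x β * ξ 0 ^ (β.1.1 : ℕ) * ξ 1 ^ (β.1.2 : ℕ)

/-- `E_k1(x) = ∫_{[0,1]²} e(P(ξ; x)) dξ` with `e(t) = exp(2πit)`. -/
def Eone (k : ℕ) (x : Idx k → ℝ) : ℂ :=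
  ∫ ξ in Icc (0 : Fin 2 → ℝ) 1, Complex.exp (2 * Real.pi * Complex.I * (Pphase k x ξ))

section OneVariable

open Polynomial

/-- The character `t ↦ exp (2πit)`. -/
def ex (t : ℝ) : ℂ := Complex.exp (2 * Real.pi * Complex.I * t)

lemma norm_ex (t : ℝ) : ‖ex t‖ = 1 := by
  rw [ex, show (2 * Real.pi * Complex.I * t : ℂ) = ((2 * Real.pi * t : ℝ) : ℂ) * Complex.I by
    push_cast; ring]
  exact Complex.norm_exp_ofReal_mul_I _

lemma ex_add (s t : ℝ) : ex (s + t) = ex s * ex t := by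
  rw [ex, ex, ex, ← Complex.exp_add]; push_cast; ring_nf

@[fun_prop]
lemma continuous_ex : Continuous ex := by unfold ex; fun_prop

lemma hasDerivAt_ex_comp {f : ℝ → ℝ} {f' x : ℝ} (h : HasDerivAt f f' x) :
    HasDerivAt (fun t => ex (f t)) (2 * Real.pi * Complex.I * f' * ex (f x)) x := by
  have := ((h.ofReal_comp).const_mul (2 * Real.pi * Complex.I)).cexp
  unfold ex
  convert this using 1
  ring

/-- A function of intervals which is subadditive and bounded by `M` on the intervals whose interior
avoids the finite set `R` is bounded by `M` times the number of pieces cut out by `R`. -/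
lemma le_of_subadditive_of_avoids (f : ℝ → ℝ → ℝ) (M : ℝ) (R : Finset ℝ)
    (hadd : ∀ a c b, a ≤ c → c ≤ b → f a b ≤ f a c + f c b)
    (hM : ∀ a b, a ≤ b → 0 ≤ a → b ≤ 1 → (∀ x ∈ Ioo a b, x ∉ R) → f a b ≤ M) :
    f 0 1 ≤ (R.card + 1) * M := by
  have key : ∀ n : ℕ, ∀ a b : ℝ, a ≤ b → 0 ≤ a → b ≤ 1 →
      (R.filter (fun x => x ∈ Ioo a b)).card = n → f a b ≤ (n + 1) * M := by
    intro n
    induction n using Nat.strong_induction_on with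
    | _ n ih =>
      intro a b hab ha hb hn
      by_cases h : ∀ x ∈ Ioo a b, x ∉ R
      · have h0 : n = 0 := by
          rw [← hn, Finset.card_eq_zero, Finset.filter_eq_empty_iff]
          exact fun x hx hx' => h x hx' hx
        subst h0
        simpa using hM a b hab ha hb h
      · push Not at h
        obtain ⟨c, hc, hcR⟩ := h
        set n1 := (R.filter (fun x => x ∈ Ioo a c)).card with h1
        set n2 := (R.filter (fun x => x ∈ Ioo c b)).card with h2
        have hsub : n1 + n2 + 1 = n := by
          rw [← hn, h1, h2, ← Finset.card_union_of_disjoint, ← Finset.card_insert_of_notMem (a := c)]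
          · congr 1
            ext x
            simp only [Finset.mem_insert, Finset.mem_union, Finset.mem_filter, mem_Ioo]
            constructor
            · rintro (rfl | ⟨h, h'⟩ | ⟨h, h'⟩)
              · exact ⟨hcR, hc⟩
              · exact ⟨h, h'.1, h'.2.trans hc.2⟩
              · exact ⟨h, hc.1.trans h'.1, h'.2⟩
            · rintro ⟨h, h'⟩
              rcases lt_trichotomy x c with h3 | h3 | h3
              · exact Or.inr (Or.inl ⟨h, h'.1, h3⟩)
              · exact Or.inl h3
              · exact Or.inr (Or.inr ⟨h, h3, h'.2⟩)
          · simp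
          · rw [Finset.disjoint_left]
            intro x hx hx'
            simp only [Finset.mem_filter, mem_Ioo] at hx hx'
            linarith [hx.2.2, hx'.2.1]
        have e1 := ih n1 (by omega) a c hc.1.le ha (hc.2.le.trans hb) rfl
        have e2 := ih n2 (by omega) c b hc.2.le (ha.trans hc.1.le) hb rfl
        have e3 := hadd a c b hc.1.le hc.2.le
        rw [← hsub]; push_cast
        linarith
  have hM0 : 0 ≤ M := by
    have h1 := hadd 0 0 0 le_rfl le_rfl
    have h2 := hM 0 0 le_rfl le_rfl zero_le_one (by simp)
    linarith
  refine (key _ 0 1 zero_le_one le_rfl le_rfl rfl).trans ?_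
  gcongr
  exact Finset.filter_subset _ _

lemma nonneg_or_nonpos_of_avoids_roots (g : ℝ[X]) {a b : ℝ}
    (h : ∀ x ∈ Ioo a b, x ∉ g.roots.toFinset) :
    (∀ x ∈ Ioo a b, 0 ≤ g.eval x) ∨ (∀ x ∈ Ioo a b, g.eval x ≤ 0) := by
  by_cases hg : g = 0
  · left; simp [hg]
  by_contra! hcon
  obtain ⟨⟨x, hx, hx'⟩, y, hy, hy'⟩ := hcon
  have hpre : IsPreconnected (Ioo a b) := isPreconnected_Ioo
  obtain ⟨z, hz, hz'⟩ := hpre.intermediate_value hx hy g.continuous.continuousOn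
    (show (0 : ℝ) ∈ Icc _ _ from ⟨hx'.le, hy'.le⟩)
  apply h z hz
  simpa [hg] using hz'

lemma card_roots_toFinset_le (g : ℝ[X]) {d : ℕ} (h : g.natDegree ≤ d) :
    g.roots.toFinset.card ≤ d :=
  (Multiset.toFinset_card_le _).trans ((card_roots' g).trans h)

lemma natDegree_sq_sub_C_le {g : ℝ[X]} {d : ℕ} (h : g.natDegree ≤ d) (c : ℝ) :
    (g ^ 2 - C c).natDegree ≤ 2 * d := by
  refine (natDegree_sub_le _ _).trans ?_
  rw [natDegree_C, max_eq_left (Nat.zero_le _)]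
  exact natDegree_pow_le.trans (by gcongr)

/-- On the set where a polynomial is at most `B`, its derivative is rarely larger than `Λ`. -/
lemma volume_small_large_deriv_le {f : ℝ[X]} {d : ℕ} (hd : f.natDegree ≤ d) {B Λ : ℝ} (hB : 0 ≤ B)
    (hΛ : 0 < Λ) :
    volume.real {t ∈ Ioo (0 : ℝ) 1 | |f.eval t| ≤ B ∧ Λ < |(derivative f).eval t|} ≤
      (2 * d + 1) * (2 * B / Λ) := by
  set S : Set ℝ := {t | |f.eval t| ≤ B ∧ Λ < |(derivative f).eval t|} with hS
  set g := derivative f ^ 2 - C (Λ ^ 2) with hg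
  have hfin : ∀ a b : ℝ, volume (S ∩ Ioc a b) ≠ ⊤ := fun a b =>
    ((measure_mono inter_subset_right).trans_lt measure_Ioc_lt_top).ne
  have hmain := le_of_subadditive_of_avoids (fun a b => volume.real (S ∩ Ioc a b)) (2 * B / Λ)
    g.roots.toFinset ?_ ?_
  · have hcard : (g.roots.toFinset.card : ℝ) ≤ 2 * d := by
      exact_mod_cast card_roots_toFinset_le g
        (natDegree_sq_sub_C_le ((natDegree_derivative_le f).trans (by omega)) _)
    refine le_trans ?_ (hmain.trans ?_)
    · refine measureReal_mono ?_ (hfin 0 1)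
      rintro t ⟨ht, ht'⟩
      exact ⟨ht', ht.1, ht.2.le⟩
    · gcongr
  · intro a c b hac hcb
    have : S ∩ Ioc a b = (S ∩ Ioc a c) ∪ (S ∩ Ioc c b) := by
      rw [← inter_union_distrib_left, Ioc_union_Ioc_eq_Ioc hac hcb]
    simp only [this]
    exact measureReal_union_le _ _
  · intro a b hab _ _ hroot
    have h1 : volume.real (S ∩ Ioc a b) = volume.real (S ∩ Ioo a b) := by
      apply measureReal_congr
      exact Filter.EventuallyEq.inter (Filter.EventuallyEq.refl _ _) Ioo_ae_eq_Ioc.symm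
    simp only [h1]
    have hev : ∀ x, g.eval x = (derivative f).eval x ^ 2 - Λ ^ 2 := by intro x; simp [hg]
    rcases nonneg_or_nonpos_of_avoids_roots g hroot with h | h
    · have hsep : ∀ x ∈ Ioo a b, ∀ y ∈ Ioo a b, Λ * |x - y| ≤ |f.eval x - f.eval y| := by
        have : ∀ x ∈ Ioo a b, ∀ y ∈ Ioo a b, x < y → Λ * |x - y| ≤ |f.eval x - f.eval y| := by
          intro x hx y hy hxy
          obtain ⟨z, hz, hz'⟩ := exists_deriv_eq_slope (fun t => f.eval t) hxy
            f.continuous.continuousOn f.differentiable.differentiableOn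
          have hz2 := h z ⟨hx.1.trans hz.1, hz.2.trans hy.2⟩
          rw [hev, sub_nonneg, sq_le_sq, abs_of_pos hΛ] at hz2
          rw [Polynomial.deriv] at hz'
          rw [hz', abs_div, le_div_iff₀ (abs_pos.2 (sub_pos.2 hxy).ne')] at hz2
          rwa [abs_sub_comm x y, abs_sub_comm (f.eval x)]
        intro x hx y hy
        rcases lt_trichotomy x y with h3 | h3 | h3
        · exact this x hx y hy h3
        · simp [h3]
        · rw [abs_sub_comm x y, abs_sub_comm (f.eval x)]; exact this y hy x hx h3
      have hdiam : volume (S ∩ Ioo a b) ≤ ENNReal.ofReal (2 * B / Λ) := by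
        refine (Real.volume_le_diam _).trans (Metric.ediam_le fun x hx y hy => ?_)
        rw [edist_dist, Real.dist_eq]
        refine ENNReal.ofReal_le_ofReal ?_
        rw [le_div_iff₀ hΛ, mul_comm]
        refine (hsep x hx.2 y hy.2).trans ((abs_sub _ _).trans ?_)
        linarith [hx.1.1, hy.1.1]
      exact ENNReal.toReal_le_of_le_ofReal (by positivity) hdiam
    · have : S ∩ Ioo a b = ∅ := by
        rw [eq_empty_iff_forall_notMem]
        rintro x ⟨hx, hx'⟩
        have h2 := h x hx'
        rw [hev, sub_nonpos, sq_le_sq, abs_of_pos hΛ] at h2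
        exact absurd hx.2 (not_lt.2 h2)
      simp only [this, measureReal_empty]
      positivity

/-- If a polynomial is small on a large set then at some point all of its derivatives are
controlled. -/
lemma exists_forall_derivative_le (d : ℕ) : ∃ C : ℝ, 1 ≤ C ∧ ∀ (f : ℝ[X]), f.natDegree ≤ d →
    ∀ B η : ℝ, 0 < B → 0 < η →
      η ≤ volume.real {t ∈ Ioo (0 : ℝ) 1 | |f.eval t| ≤ B} →
      ∃ t ∈ Icc (0 : ℝ) 1, ∀ m, |(derivative^[m] f).eval t| ≤ B * (C / η) ^ m := by
  refine ⟨(d + 1) * ((2 * d + 1) * 2) + 1, by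
    have : (0 : ℝ) ≤ (d + 1) * ((2 * d + 1) * 2) := by positivity
    linarith, ?_⟩
  intro f hf B η hB hη hvol
  set K : ℝ := (d + 1) * ((2 * d + 1) * 2) + 1 with hK
  have hKpos : 0 < K := by positivity
  set Z : Set ℝ := {t ∈ Ioo (0 : ℝ) 1 | |f.eval t| ≤ B} with hZ
  set bad : ℕ → Set ℝ := fun m => {t ∈ Ioo (0 : ℝ) 1 | |(derivative^[m] f).eval t| ≤
    B * (K / η) ^ m ∧ B * (K / η) ^ (m + 1) < |(derivative (derivative^[m] f)).eval t|} with hbad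
  have hbadv : ∀ m, volume.real (bad m) ≤ (2 * d + 1) * (2 * (η / K)) := by
    intro m
    refine (volume_small_large_deriv_le (d := d) ?_ (by positivity) (by positivity)).trans
      (le_of_eq ?_)
    · exact (natDegree_iterate_derivative f m).trans (by omega)
    · have : B * (K / η) ^ m ≠ 0 := by positivity
      rw [pow_succ]; field_simp
  have hne : ∃ t ∈ Z, ∀ m ∈ Finset.range (d + 1), t ∉ bad m := by
    by_contra! hcon
    have hsub : Z ⊆ ⋃ m ∈ Finset.range (d + 1), bad m := by
      intro t ht
      obtain ⟨m, hm, h⟩ := hcon t ht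
      exact mem_biUnion hm h
    have h1 : volume.real Z ≤ ∑ m ∈ Finset.range (d + 1), volume.real (bad m) := by
      refine (measureReal_mono hsub ?_).trans (measureReal_biUnion_finset_le _ _)
      refine ((measure_mono (iUnion₂_subset fun m _ => sep_subset _ _)).trans_lt
        (measure_Ioo_lt_top (a := (0 : ℝ)) (b := 1))).ne
    have h2 := h1.trans (Finset.sum_le_sum fun m _ => hbadv m)
    simp only [Finset.sum_const, Finset.card_range, nsmul_eq_mul] at h2
    have h3 : ((d + 1 : ℕ) : ℝ) * ((2 * d + 1) * (2 * (η / K))) = η * ((K - 1) / K) := by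
      rw [hK]; push_cast; ring
    rw [h3] at h2
    have h4 : (K - 1) / K < 1 := by rw [div_lt_one hKpos]; linarith
    nlinarith
  obtain ⟨t, ht, hgood⟩ := hne
  refine ⟨t, Ioo_subset_Icc_self ht.1, fun m => ?_⟩
  induction m with
  | zero => simpa using ht.2
  | succ m ih =>
    by_cases hm : m < d + 1
    · have := hgood m (Finset.mem_range.2 hm)
      rw [Function.iterate_succ_apply']
      by_contra! hlt
      exact this ⟨ht.1, ih, hlt⟩
    · rw [iterate_derivative_eq_zero (by omega)]
      simp only [eval_zero, abs_zero]
      positivity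

end OneVariable

section VanDerCorput

open Polynomial

lemma norm_integral_ex_le_of_le_abs_deriv {p : ℝ[X]} {a b Λ : ℝ} (hab : a ≤ b) (hΛ : 0 < Λ)
    (h1 : ∀ x ∈ Icc a b, Λ ≤ |(derivative p).eval x|)
    (h2 : (∀ x ∈ Icc a b, 0 ≤ (derivative (derivative p)).eval x) ∨
      (∀ x ∈ Icc a b, (derivative (derivative p)).eval x ≤ 0)) :
    ‖∫ t in a..b, ex (p.eval t)‖ ≤ 4 / Λ := by
  set p1 := derivative p
  set p2 := derivative p1
  have hne : ∀ x ∈ Icc a b, p1.eval x ≠ 0 := fun x hx h => by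
    have := h1 x hx
    rw [h, abs_zero] at this
    linarith
  have huIcc : uIcc a b = Icc a b := uIcc_of_le hab
  have hp1c : ContinuousOn (fun t => (p1.eval t)⁻¹) (Icc a b) :=
    p1.continuous.continuousOn.inv₀ hne
  have hinv : ∀ x ∈ Icc a b, |(p1.eval x)⁻¹| ≤ 1 / Λ := fun x hx => by
    rw [abs_inv, ← one_div]; exact one_div_le_one_div_of_le hΛ (h1 x hx)
  have hdinv : ∀ x ∈ Icc a b, HasDerivAt (fun t => (p1.eval t)⁻¹)
      (-(p2.eval x) * (p1.eval x)⁻¹ ^ 2) x := fun x hx => by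
    have := (p1.hasDerivAt x).inv (hne x hx)
    refine HasDerivAt.congr_deriv this ?_
    rw [inv_pow, div_eq_mul_inv]
  have hcI : Continuous fun t => ex (p.eval t) := continuous_ex.comp p.continuous
  have hcont2 : ContinuousOn (fun t => -(p2.eval t) * (p1.eval t)⁻¹ ^ 2) (Icc a b) :=
    p2.continuous.continuousOn.neg.mul (hp1c.pow 2)
  set F : ℝ → ℂ := fun t => (((p1.eval t)⁻¹ : ℝ) : ℂ) * ex (p.eval t) with hF
  have hdF : ∀ x ∈ uIcc a b, HasDerivAt F
      (((-(p2.eval x) * (p1.eval x)⁻¹ ^ 2 : ℝ) : ℂ) * ex (p.eval x) +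
        (2 * Real.pi * Complex.I) * ex (p.eval x)) x := by
    intro x hx
    rw [huIcc] at hx
    have := ((hdinv x hx).ofReal_comp).mul (hasDerivAt_ex_comp (p.hasDerivAt x))
    refine HasDerivAt.congr_deriv this ?_
    have h0 : ((p1.eval x : ℝ) : ℂ) ≠ 0 := by exact_mod_cast hne x hx
    rw [Complex.ofReal_inv]
    change _ + ((p1.eval x : ℝ) : ℂ)⁻¹ *
      (2 * Real.pi * Complex.I * ((p1.eval x : ℝ) : ℂ) * ex (p.eval x)) = _
    field_simp
  have hg1 : IntervalIntegrable (fun t => ((-(p2.eval t) * (p1.eval t)⁻¹ ^ 2 : ℝ) : ℂ) *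
      ex (p.eval t)) volume a b := by
    apply ContinuousOn.intervalIntegrable
    rw [huIcc]
    exact (Complex.continuous_ofReal.comp_continuousOn hcont2).mul hcI.continuousOn
  have hg2 : IntervalIntegrable (fun t => (2 * Real.pi * Complex.I) * ex (p.eval t)) volume a b :=
    (continuous_const.mul hcI).intervalIntegrable _ _
  have hftc := intervalIntegral.integral_eq_sub_of_hasDerivAt hdF (hg1.add hg2)
  rw [intervalIntegral.integral_add hg1 hg2, intervalIntegral.integral_const_mul] at hftc
  have hI1 : ‖∫ t in a..b, ((-(p2.eval t) * (p1.eval t)⁻¹ ^ 2 : ℝ) : ℂ) * ex (p.eval t)‖ ≤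
      2 / Λ := by
    refine (intervalIntegral.norm_integral_le_integral_norm hab).trans ?_
    have hreal := intervalIntegral.integral_eq_sub_of_hasDerivAt (a := a) (b := b)
      (fun x hx => hdinv x (huIcc ▸ hx))
      (ContinuousOn.intervalIntegrable (by rwa [huIcc]))
    have hb := hinv b (right_mem_Icc.2 hab)
    have ha := hinv a (left_mem_Icc.2 hab)
    rw [abs_le] at ha hb
    have h2Λ : (2 : ℝ) / Λ = 1 / Λ + 1 / Λ := by ring
    rcases h2 with h2 | h2
    · have : ∫ t in a..b, ‖((-(p2.eval t) * (p1.eval t)⁻¹ ^ 2 : ℝ) : ℂ) * ex (p.eval t)‖ =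
          -∫ t in a..b, (-(p2.eval t) * (p1.eval t)⁻¹ ^ 2) := by
        rw [← intervalIntegral.integral_neg]
        refine intervalIntegral.integral_congr fun t ht => ?_
        rw [huIcc] at ht
        simp only [norm_mul, norm_ex, mul_one, Complex.norm_real, Real.norm_eq_abs, abs_neg]
        rw [abs_of_nonneg (h2 t ht), abs_of_nonneg (sq_nonneg _)]
        ring
      rw [this, hreal]
      linarith
    · have : ∫ t in a..b, ‖((-(p2.eval t) * (p1.eval t)⁻¹ ^ 2 : ℝ) : ℂ) * ex (p.eval t)‖ =
          ∫ t in a..b, (-(p2.eval t) * (p1.eval t)⁻¹ ^ 2) := by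
        refine intervalIntegral.integral_congr fun t ht => ?_
        rw [huIcc] at ht
        simp only [norm_mul, norm_ex, mul_one, Complex.norm_real, Real.norm_eq_abs]
        rw [abs_neg, abs_of_nonpos (h2 t ht), abs_of_nonneg (sq_nonneg _)]
      rw [this, hreal]
      linarith
  have hFn : ∀ x ∈ Icc a b, ‖F x‖ ≤ 1 / Λ := fun x hx => by
    rw [hF]
    simp only [norm_mul, norm_ex, mul_one, Complex.norm_real, Real.norm_eq_abs]
    exact hinv x hx
  have h2pi : ‖(2 * Real.pi * Complex.I : ℂ)‖ = 2 * Real.pi := by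
    simp [abs_of_pos Real.pi_pos]
  have hfin : 2 * Real.pi * ‖∫ t in a..b, ex (p.eval t)‖ ≤ 4 / Λ := by
    rw [← h2pi, ← norm_mul, eq_sub_of_add_eq' hftc]
    refine (norm_sub_le _ _).trans ?_
    have e1 := (norm_sub_le (F b) (F a)).trans
      (add_le_add (hFn b (right_mem_Icc.2 hab)) (hFn a (left_mem_Icc.2 hab)))
    have : (4 : ℝ) / Λ = 1 / Λ + 1 / Λ + 2 / Λ := by ring
    linarith
  have hn := norm_nonneg (∫ t in a..b, ex (p.eval t))
  nlinarith [Real.pi_gt_three]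

/-- Van der Corput estimate for polynomial phases in terms of the sublevel set of the
derivative. -/
lemma norm_integral_ex_le {p : ℝ[X]} {d : ℕ} (hd : p.natDegree ≤ d) {Λ : ℝ} (hΛ : 0 < Λ) :
    ‖∫ t in (0 : ℝ)..1, ex (p.eval t)‖ ≤
      volume.real {t ∈ Ioo (0 : ℝ) 1 | |(derivative p).eval t| ≤ Λ} +
        (3 * d + 1) * (4 / Λ) := by
  set p1 := derivative p with hp1
  set p2 := derivative p1 with hp2
  set S : Set ℝ := {t | |p1.eval t| ≤ Λ} with hS
  have hSm : MeasurableSet S := measurableSet_le p1.continuous.abs.measurable measurable_const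
  set g := p1 ^ 2 - C (Λ ^ 2) with hg
  have hev : ∀ x, g.eval x = p1.eval x ^ 2 - Λ ^ 2 := by intro x; simp [hg]
  set R := g.roots.toFinset ∪ p2.roots.toFinset with hR
  have hcI : Continuous fun t => ex (p.eval t) := continuous_ex.comp p.continuous
  have hfin : ∀ a b : ℝ, volume (S ∩ Ioc a b) ≠ ⊤ := fun a b =>
    ((measure_mono inter_subset_right).trans_lt measure_Ioc_lt_top).ne
  have hp1d : p1.natDegree ≤ d := (natDegree_derivative_le p).trans (by omega)
  have hp2d : p2.natDegree ≤ d := (natDegree_derivative_le p1).trans (by omega)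
  have hmain := le_of_subadditive_of_avoids
    (fun a b => ‖∫ t in a..b, ex (p.eval t)‖ - volume.real (S ∩ Ioc a b)) (4 / Λ) R ?_ ?_
  · have hcard : (R.card : ℝ) ≤ 3 * d := by
      have h1 := card_roots_toFinset_le g (natDegree_sq_sub_C_le hp1d _)
      have h2 := card_roots_toFinset_le p2 hp2d
      have h3 := Finset.card_union_le g.roots.toFinset p2.roots.toFinset
      have : R.card ≤ 3 * d := by rw [hR]; omega
      exact_mod_cast this
    have hvol : volume.real (S ∩ Ioc 0 1) =
        volume.real {t ∈ Ioo (0 : ℝ) 1 | |p1.eval t| ≤ Λ} := by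
      have : {t ∈ Ioo (0 : ℝ) 1 | |p1.eval t| ≤ Λ} = S ∩ Ioo 0 1 := by
        ext t; simp [hS, and_comm]
      rw [this]
      apply measureReal_congr
      exact Filter.EventuallyEq.inter (Filter.EventuallyEq.refl _ _) Ioo_ae_eq_Ioc.symm
    have : ((R.card : ℝ) + 1) * (4 / Λ) ≤ (3 * d + 1) * (4 / Λ) := by gcongr
    rw [← hvol]
    linarith
  · intro a c b hac hcb
    have h1 : volume.real (S ∩ Ioc a b) =
        volume.real (S ∩ Ioc a c) + volume.real (S ∩ Ioc c b) := by
      rw [← measureReal_union _ (hSm.inter measurableSet_Ioc) (hfin _ _) (hfin _ _),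
        ← inter_union_distrib_left, Ioc_union_Ioc_eq_Ioc hac hcb]
      exact (Ioc_disjoint_Ioc_of_le le_rfl).mono inter_subset_right inter_subset_right
    have h2 := intervalIntegral.integral_add_adjacent_intervals (μ := volume)
      (hcI.intervalIntegrable a c) (hcI.intervalIntegrable c b)
    have h3 := norm_add_le (∫ t in a..c, ex (p.eval t)) (∫ t in c..b, ex (p.eval t))
    rw [h2] at h3
    simp only [h1]
    linarith
  · intro a b hab _ _ hroot
    rcases eq_or_lt_of_le hab with rfl | hlt
    · simp; positivity
    have hcl : closure (Ioo a b) = Icc a b := closure_Ioo hlt.ne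
    have hext : ∀ q : ℝ[X], ((∀ x ∈ Ioo a b, 0 ≤ q.eval x) → ∀ x ∈ Icc a b, 0 ≤ q.eval x) ∧
        ((∀ x ∈ Ioo a b, q.eval x ≤ 0) → ∀ x ∈ Icc a b, q.eval x ≤ 0) := by
      intro q
      rw [← hcl]
      exact ⟨fun h => closure_minimal h (isClosed_le continuous_const q.continuous),
        fun h => closure_minimal h (isClosed_le q.continuous continuous_const)⟩
    rcases nonneg_or_nonpos_of_avoids_roots g
      (fun x hx hx' => hroot x hx (Finset.mem_union_left _ hx')) with h | h
    · have h1 : ∀ x ∈ Icc a b, Λ ≤ |p1.eval x| := by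
        intro x hx
        have := (hext g).1 h x hx
        rwa [hev, sub_nonneg, sq_le_sq, abs_of_pos hΛ] at this
      have h2 : (∀ x ∈ Icc a b, 0 ≤ p2.eval x) ∨ (∀ x ∈ Icc a b, p2.eval x ≤ 0) :=
        (nonneg_or_nonpos_of_avoids_roots p2
          (fun x hx hx' => hroot x hx (Finset.mem_union_right _ hx'))).imp (hext p2).1 (hext p2).2
      have := norm_integral_ex_le_of_le_abs_deriv hab hΛ h1 h2
      have h0 : 0 ≤ volume.real (S ∩ Ioc a b) := measureReal_nonneg
      linarith
    · have h1 : S ∩ Ioc a b = Ioc a b := by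
        refine inter_eq_right.2 fun x hx => ?_
        have := (hext g).2 h x (Ioc_subset_Icc_self hx)
        rwa [hev, sub_nonpos, sq_le_sq, abs_of_pos hΛ] at this
      have h2 : ‖∫ t in a..b, ex (p.eval t)‖ ≤ 1 * |b - a| :=
        intervalIntegral.norm_integral_le_of_norm_le_const fun x _ => (norm_ex _).le
      rw [abs_of_nonneg (sub_nonneg.2 hab)] at h2
      simp only [h1, Real.volume_real_Ioc_of_le hab]
      have : 0 ≤ 4 / Λ := by positivity
      linarith

/-- A large oscillatory integral forces all derivatives of the phase to be small at a common
point. -/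
lemma exists_derivative_le_of_le_norm_integral (d : ℕ) : ∃ C : ℝ, 1 ≤ C ∧ ∀ (p : ℝ[X]),
    p.natDegree ≤ d → ∀ δ : ℝ, 0 < δ → δ ≤ ‖∫ t in (0 : ℝ)..1, ex (p.eval t)‖ →
      ∃ t ∈ Icc (0 : ℝ) 1, ∀ m, |(derivative^[m] (derivative p)).eval t| ≤
        (C / δ) * (C / δ) ^ m := by
  obtain ⟨C, hC, h⟩ := exists_forall_derivative_le d
  set K : ℝ := 2 * C + 8 * (3 * d + 1) with hK
  have hd0 : (0 : ℝ) ≤ d := Nat.cast_nonneg d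
  refine ⟨K, by rw [hK]; linarith, fun p hp δ hδ hint => ?_⟩
  set Λ : ℝ := 8 * (3 * d + 1) / δ with hΛ
  have hΛ0 : 0 < Λ := by positivity
  have h1 := hint.trans (norm_integral_ex_le hp hΛ0)
  have h2 : (3 * d + 1) * (4 / Λ) = δ / 2 := by
    rw [hΛ]; field_simp; norm_num
  rw [h2] at h1
  obtain ⟨t, ht, ht'⟩ := h (derivative p) ((natDegree_derivative_le p).trans (by omega)) Λ (δ / 2)
    hΛ0 (by positivity) (by linarith)
  refine ⟨t, ht, fun m => (ht' m).trans ?_⟩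
  have e1 : Λ ≤ K / δ := by rw [hΛ]; gcongr; linarith
  have e2 : C / (δ / 2) ≤ K / δ := by
    rw [div_div_eq_mul_div]; gcongr; linarith
  gcongr

end VanDerCorput

section GeometricMean

/-- The geometric mean of a tuple of reals. -/
def gm {p : ℕ} (v : Fin p → ℝ) : ℝ := ∏ i, v i ^ ((1 : ℝ) / p)

variable {p : ℕ}

lemma gm_nonneg {v : Fin p → ℝ} (hv : ∀ i, 0 ≤ v i) : 0 ≤ gm v :=
  Finset.prod_nonneg fun i _ => Real.rpow_nonneg (hv i) _

lemma gm_pos {v : Fin p → ℝ} (hv : ∀ i, 0 < v i) : 0 < gm v :=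
  Finset.prod_pos fun i _ => Real.rpow_pos_of_pos (hv i) _

lemma gm_mul {u v : Fin p → ℝ} (hu : ∀ i, 0 ≤ u i) (hv : ∀ i, 0 ≤ v i) :
    gm (fun i => u i * v i) = gm u * gm v := by
  rw [gm, gm, gm, ← Finset.prod_mul_distrib]
  exact Finset.prod_congr rfl fun i _ => Real.mul_rpow (hu i) (hv i)

lemma gm_mono {u v : Fin p → ℝ} (hu : ∀ i, 0 ≤ u i) (h : ∀ i, u i ≤ v i) : gm u ≤ gm v :=
  Finset.prod_le_prod (fun i _ => Real.rpow_nonneg (hu i) _)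
    fun i _ => Real.rpow_le_rpow (hu i) (h i) (by positivity)

lemma gm_const (hp : p ≠ 0) {c : ℝ} (hc : 0 ≤ c) : gm (fun _ : Fin p => c) = c := by
  rw [gm, Finset.prod_const, Finset.card_univ, Fintype.card_fin, ← Real.rpow_natCast,
    ← Real.rpow_mul hc, one_div, inv_mul_cancel₀ (by exact_mod_cast hp), Real.rpow_one]

lemma gm_const_mul (hp : p ≠ 0) {c : ℝ} (hc : 0 ≤ c) {v : Fin p → ℝ} (hv : ∀ i, 0 ≤ v i) :
    gm (fun i => c * v i) = c * gm v := by
  rw [gm_mul (fun _ => hc) hv, gm_const hp hc]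

lemma gm_pow {v : Fin p → ℝ} (hv : ∀ i, 0 ≤ v i) (m : ℕ) :
    gm (fun i => v i ^ m) = gm v ^ m := by
  rw [gm, gm, ← Finset.prod_pow]
  refine Finset.prod_congr rfl fun i _ => ?_
  rw [← Real.rpow_natCast, ← Real.rpow_natCast, ← Real.rpow_mul (hv i), ← Real.rpow_mul (hv i),
    mul_comm]

lemma gm_pow_card (hp : p ≠ 0) {v : Fin p → ℝ} (hv : ∀ i, 0 ≤ v i) : gm v ^ p = ∏ i, v i := by
  rw [gm, ← Finset.prod_pow]
  refine Finset.prod_congr rfl fun i _ => ?_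
  rw [← Real.rpow_natCast, ← Real.rpow_mul (hv i), one_div,
    inv_mul_cancel₀ (by exact_mod_cast hp), Real.rpow_one]

/-- Some `m` entries of a tuple have product at most the `m`-th power of the geometric mean. -/
lemma exists_injective_prod_le_gm_pow {m : ℕ} (hm : m ≤ p) (hp : p ≠ 0) {v : Fin p → ℝ}
    (hv : ∀ i, 0 < v i) :
    ∃ σ : Fin m → Fin p, Function.Injective σ ∧ ∏ j, v (σ j) ≤ gm v ^ m := by
  have : NeZero p := ⟨hp⟩
  suffices ∃ c : Fin p, ∏ j : Fin m, v (c + Fin.castLE hm j) ≤ gm v ^ m by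
    obtain ⟨c, hc⟩ := this
    refine ⟨fun j => c + Fin.castLE hm j, fun a b hab => ?_, hc⟩
    exact Fin.castLE_injective hm (add_left_cancel hab)
  by_contra! hcon
  have h1 : ∏ _c : Fin p, gm v ^ m < ∏ c : Fin p, ∏ j : Fin m, v (c + Fin.castLE hm j) :=
    Finset.prod_lt_prod_of_nonempty (fun _ _ => pow_pos (gm_pos hv) m) (fun c _ => hcon c)
      Finset.univ_nonempty
  rw [Finset.prod_comm] at h1
  have h2 : ∀ j : Fin m, ∏ c : Fin p, v (c + Fin.castLE hm j) = ∏ c, v c := fun j =>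
    Equiv.prod_comp (Equiv.addRight (Fin.castLE hm j)) v
  simp only [h2, Finset.prod_const, Finset.card_univ, Fintype.card_fin] at h1
  rw [← gm_pow_card hp fun i => (hv i).le, ← pow_mul, ← pow_mul, mul_comm] at h1
  exact lt_irrefl _ h1

end GeometricMean

section Slices

open Matrix

lemma pow_choose_le_abs_det_vandermonde {n : ℕ} {v : Fin n → ℝ} {η : ℝ} (hη : 0 ≤ η)
    (hsep : ∀ i j, i ≠ j → η ≤ |v i - v j|) : η ^ (n.choose 2) ≤ |(vandermonde v).det| := by
  rw [det_vandermonde, Finset.abs_prod]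
  have h1 : ∏ i : Fin n, ∏ j ∈ Finset.Ioi i, η = η ^ (n.choose 2) := by
    simp only [Finset.prod_const, Finset.prod_pow_eq_pow_sum, Fin.card_Ioi]
    congr 1
    rw [Fin.sum_univ_eq_sum_range (fun i => n - 1 - i) n, Finset.sum_range_reflect (fun i => i),
      Finset.sum_range_id, Nat.choose_two_right]
  rw [← h1]
  refine Finset.prod_le_prod (fun i _ => Finset.prod_nonneg fun _ _ => hη) fun i _ => ?_
  rw [Finset.abs_prod]
  refine Finset.prod_le_prod (fun _ _ => hη) fun j hj => hsep j i ?_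
  exact (Finset.mem_Ioi.1 hj).ne'

/-- The set of polynomials taking values in given sets at separated points is small. -/
lemma volume_forall_sum_pow_mem_le {p n : ℕ} (hn : n ≤ p) (hp : p ≠ 0) {s : Fin p → ℝ} {η w : ℝ}
    (hη : 0 < η) (hw : 1 ≤ w) (hsep : ∀ i j, i ≠ j → η ≤ |s i - s j|) (V : Fin p → Set ℝ)
    {v : Fin p → ℝ} (hv : ∀ i, 0 < v i) (hV : ∀ i, volume (V i) ≤ ENNReal.ofReal (v i)) :
    volume {q : Fin n → ℝ | ∀ i, w * ∑ j, q j * s i ^ (j : ℕ) ∈ V i} ≤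
      ENNReal.ofReal (η⁻¹ ^ (n.choose 2) * gm v ^ n) := by
  obtain ⟨σ, hσ, hprod⟩ := exists_injective_prod_le_gm_pow hn hp hv
  set M : Matrix (Fin n) (Fin n) ℝ := w • vandermonde (s ∘ σ) with hM
  have hdet : η ^ (n.choose 2) ≤ |M.det| := by
    rw [hM, det_smul, abs_mul, abs_of_nonneg (by positivity)]
    have h1 : 1 ≤ w ^ Fintype.card (Fin n) := one_le_pow₀ hw
    have h2 := pow_choose_le_abs_det_vandermonde (v := s ∘ σ) hη.le
      fun i j hij => hsep _ _ (hσ.ne hij)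
    have h3 : (0 : ℝ) ≤ η ^ (n.choose 2) := by positivity
    nlinarith
  have hdet0 : LinearMap.det (Matrix.toLin' M) ≠ 0 := by
    rw [LinearMap.det_toLin']
    intro h
    rw [h, abs_zero] at hdet
    exact absurd hdet (not_le.2 (by positivity))
  have hsub : {q : Fin n → ℝ | ∀ i, w * ∑ j, q j * s i ^ (j : ℕ) ∈ V i} ⊆
      Matrix.toLin' M ⁻¹' (Set.univ.pi fun i => V (σ i)) := by
    intro q hq i _
    have := hq (σ i)
    convert this using 1
    rw [Matrix.toLin'_apply, hM, Matrix.smul_mulVec, Pi.smul_apply, smul_eq_mul]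
    congr 1
    simp only [mulVec, dotProduct, vandermonde_apply, Function.comp]
    exact Finset.sum_congr rfl fun j _ => mul_comm _ _
  refine (measure_mono hsub).trans ?_
  rw [Measure.addHaar_preimage_linearMap volume hdet0, LinearMap.det_toLin', volume_pi_pi]
  have hb : ∏ i, volume (V (σ i)) ≤ ENNReal.ofReal (gm v ^ n) := by
    refine (Finset.prod_le_prod' fun i _ => hV (σ i)).trans ?_
    rw [← ENNReal.ofReal_prod_of_nonneg fun i _ => (hv _).le]
    exact ENNReal.ofReal_le_ofReal hprod
  rw [ENNReal.ofReal_mul (by positivity)]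
  refine mul_le_mul' (ENNReal.ofReal_le_ofReal ?_) hb
  rw [abs_inv, inv_pow]
  exact inv_anti₀ (by positivity) hdet

end Slices

section PhasePolynomials

open Polynomial

/-- Indices of the coefficients of the `n + 1` highest powers of `ξ₂` in a phase of degree `k`,
grouped by the power of `ξ₂`. -/
def WI : ℕ → Type
  | 0 => Fin 1
  | n + 1 => WI n ⊕ Fin (n + 2)

instance fintypeWI : ∀ n, Fintype (WI n)
  | 0 => inferInstanceAs (Fintype (Fin 1))
  | n + 1 => @instFintypeSum (WI n) (Fin (n + 2)) (fintypeWI n) _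

/-- Splitting off the coefficients of the lowest power of `ξ₂`. -/
def splitWI (n : ℕ) : (WI (n + 1) → ℝ) ≃ᵐ (WI n → ℝ) × (Fin (n + 2) → ℝ) :=
  MeasurableEquiv.sumPiEquivProdPi (fun _ : WI n ⊕ Fin (n + 2) => ℝ)

lemma measurePreserving_splitWI (n : ℕ) : MeasurePreserving (splitWI n) :=
  volume_measurePreserving_sumPiEquivProdPi (fun _ : WI n ⊕ Fin (n + 2) => ℝ)

lemma continuous_splitWI (n : ℕ) : Continuous (splitWI n) := by
  refine Continuous.prodMk ?_ ?_
  · exact continuous_pi fun i => continuous_apply (A := fun _ : WI n ⊕ Fin (n + 2) => ℝ) (Sum.inl i)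
  · exact continuous_pi fun i => continuous_apply (A := fun _ : WI n ⊕ Fin (n + 2) => ℝ) (Sum.inr i)

/-- The sum of the terms of the phase with the `n + 1` highest powers of `ξ₂`, as a polynomial in
`ξ₂` for fixed `ξ₁ = s`. -/
def topPoly (k : ℕ) : ∀ n, (WI n → ℝ) → ℝ → ℝ[X]
  | 0, x, _ => C (x (0 : Fin 1)) * X ^ k
  | n + 1, x, s => topPoly k n (splitWI n x).1 s +
      C (∑ j, (splitWI n x).2 j * s ^ (j : ℕ)) * X ^ (k - (n + 1))

/-- The derivative of `topPoly` for which the lowest coefficients sit in the constant term. -/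
def topDeriv (k n : ℕ) (x : WI n → ℝ) (s : ℝ) : ℝ[X] := derivative^[k - n] (topPoly k n x s)

lemma natDegree_topPoly_le (k n : ℕ) (x : WI n → ℝ) (s : ℝ) : (topPoly k n x s).natDegree ≤ k := by
  induction n with
  | zero => exact natDegree_C_mul_X_pow_le _ _
  | succ n ih =>
    refine natDegree_add_le_of_degree_le (ih _) ((natDegree_C_mul_X_pow_le _ _).trans (by omega))

lemma natDegree_topDeriv_le (k n : ℕ) (x : WI n → ℝ) (s : ℝ) :
    (topDeriv k n x s).natDegree ≤ k :=
  ((natDegree_iterate_derivative _ _).trans (Nat.sub_le _ _)).trans (natDegree_topPoly_le _ _ _ _)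

lemma topDeriv_zero (k : ℕ) (x : WI 0 → ℝ) (s : ℝ) :
    topDeriv k 0 x s = C (k.factorial * x (0 : Fin 1)) := by
  rw [topDeriv, topPoly, Nat.sub_zero, iterate_derivative_C_mul, iterate_derivative_X_pow_eq_smul]
  simp [Nat.descFactorial_self, mul_comm]

lemma topDeriv_succ (k n : ℕ) (x : WI (n + 1) → ℝ) (s : ℝ) :
    topDeriv k (n + 1) x s = derivative^[k - (n + 1)] (topPoly k n (splitWI n x).1 s) +
      C ((k - (n + 1)).factorial * ∑ j, (splitWI n x).2 j * s ^ (j : ℕ)) := by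
  rw [topDeriv, topPoly, iterate_map_add, iterate_derivative_C_mul,
    iterate_derivative_X_pow_eq_smul]
  simp [Nat.descFactorial_self, mul_comm, smul_eq_C_mul]

lemma derivative_iterate_topPoly {k n : ℕ} (h : n + 1 ≤ k) (x : WI n → ℝ) (s : ℝ) :
    derivative (derivative^[k - (n + 1)] (topPoly k n x s)) = topDeriv k n x s := by
  rw [topDeriv, ← Function.iterate_succ_apply' derivative]
  congr 2
  omega

lemma continuous_eval_iterate_derivative_topPoly (k n m : ℕ) :
    Continuous fun z : ((WI n → ℝ) × ℝ) × ℝ =>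
      (derivative^[m] (topPoly k n z.1.1 z.1.2)).eval z.2 := by
  induction n with
  | zero =>
    have h : ∀ z : ((WI 0 → ℝ) × ℝ) × ℝ, (derivative^[m] (topPoly k 0 z.1.1 z.1.2)).eval z.2 =
        z.1.1 (0 : Fin 1) * (derivative^[m] (X ^ k : ℝ[X])).eval z.2 := by
      intro z
      rw [topPoly, iterate_derivative_C_mul, eval_C_mul]
    simp only [h]
    have h1 : Continuous fun z : ((WI 0 → ℝ) × ℝ) × ℝ => z.1.1 (0 : Fin 1) :=
      (continuous_apply _).comp (continuous_fst.comp continuous_fst)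
    exact h1.mul ((derivative^[m] (X ^ k : ℝ[X])).continuous.comp continuous_snd)
  | succ n ih =>
    have h : ∀ z : ((WI (n + 1) → ℝ) × ℝ) × ℝ,
        (derivative^[m] (topPoly k (n + 1) z.1.1 z.1.2)).eval z.2 =
        (derivative^[m] (topPoly k n (splitWI n z.1.1).1 z.1.2)).eval z.2 +
        (∑ j, (splitWI n z.1.1).2 j * z.1.2 ^ (j : ℕ)) *
          (derivative^[m] (X ^ (k - (n + 1)) : ℝ[X])).eval z.2 := by
      intro z
      rw [topPoly, iterate_map_add, eval_add, iterate_derivative_C_mul, eval_C_mul]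
    simp only [h]
    have hs : Continuous fun z : ((WI (n + 1) → ℝ) × ℝ) × ℝ => splitWI n z.1.1 :=
      (continuous_splitWI n).comp (continuous_fst.comp continuous_fst)
    refine Continuous.add ?_ (Continuous.mul ?_
      ((derivative^[m] (X ^ (k - (n + 1)) : ℝ[X])).continuous.comp continuous_snd))
    · exact ih.comp (Continuous.prodMk (Continuous.prodMk (continuous_fst.comp hs)
        (continuous_snd.comp continuous_fst)) continuous_snd)
    · refine continuous_finsetSum _ fun j _ => Continuous.mul ?_ ?_
      · exact (continuous_apply j).comp (continuous_snd.comp hs)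
      · exact (continuous_snd.comp continuous_fst).pow _

/-- Coefficient vectors for which, at every point `s i`, all derivatives of `topDeriv` are
controlled at a common point of the unit interval. -/
def goodSet (k n : ℕ) {p : ℕ} (s A K : Fin p → ℝ) : Set (WI n → ℝ) :=
  {x | ∀ i, ∃ t ∈ Icc (0 : ℝ) 1, ∀ m,
    |(derivative^[m] (topDeriv k n x (s i))).eval t| ≤ A i * K i ^ m}

lemma isClosed_goodSet (k n : ℕ) {p : ℕ} (s A K : Fin p → ℝ) : IsClosed (goodSet k n s A K) := by
  rw [goodSet, ofPred_forall]
  refine isClosed_iInter fun i => ?_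
  have hc : IsClosed {z : (WI n → ℝ) × (Icc (0 : ℝ) 1) | ∀ m,
      |(derivative^[m] (topDeriv k n z.1 (s i))).eval (z.2 : ℝ)| ≤ A i * K i ^ m} := by
    rw [ofPred_forall]
    refine isClosed_iInter fun m => isClosed_le (Continuous.abs ?_) continuous_const
    simp only [topDeriv, ← Function.iterate_add_apply]
    exact (continuous_eval_iterate_derivative_topPoly k n (m + (k - n))).comp
      (Continuous.prodMk (Continuous.prodMk continuous_fst continuous_const)
        (continuous_subtype_val.comp continuous_snd))
  have := isClosedMap_fst_of_compactSpace (X := WI n → ℝ) (Y := Icc (0 : ℝ) 1) _ hc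
  convert this using 1
  ext x
  simp only [mem_ofPred_eq, mem_image, Prod.exists, exists_and_right, exists_eq_right]
  constructor
  · rintro ⟨t, ht, h⟩; exact ⟨⟨t, ht⟩, h⟩
  · rintro ⟨⟨t, ht⟩, h⟩; exact ⟨t, ht, h⟩

/-- The admissible constant terms, given the other coefficients. -/
def constSet (f R : ℝ[X]) (A K : ℝ) : Set ℝ :=
  {v | ∃ t ∈ Icc (0 : ℝ) 1, (∀ m, |(derivative^[m] f).eval t| ≤ A * K * K ^ m) ∧
    |R.eval t + v| ≤ A}

lemma volume_goodSet_succ_inter_le {k n p : ℕ} (h : n + 1 ≤ k) (s A K : Fin p → ℝ)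
    {W : Set (WI n → ℝ)} (hW : MeasurableSet W) (φ : (WI n → ℝ) → ℝ≥0∞)
    (hφ : ∀ ω ∈ W, volume {q : Fin (n + 2) → ℝ | ∀ i,
      ((k - (n + 1)).factorial : ℝ) * ∑ j, q j * s i ^ (j : ℕ) ∈
        constSet (topDeriv k n ω (s i)) (derivative^[k - (n + 1)] (topPoly k n ω (s i)))
          (A i) (K i)} ≤ φ ω) :
    volume (goodSet k (n + 1) s A K ∩ {x | (splitWI n x).1 ∈ W}) ≤ ∫⁻ ω in W, φ ω := by
  have hm : MeasurableSet (goodSet k (n + 1) s A K ∩ {x | (splitWI n x).1 ∈ W}) :=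
    (isClosed_goodSet k (n + 1) s A K).measurableSet.inter
      (measurable_fst.comp (splitWI n).measurable hW)
  rw [← (measurePreserving_splitWI n).symm.measure_preimage_equiv, Measure.volume_eq_prod,
    Measure.prod_apply ((splitWI n).symm.measurable hm), ← lintegral_indicator hW]
  refine lintegral_mono fun ω => ?_
  by_cases hω : ω ∈ W
  swap
  · rw [indicator_of_notMem hω, nonpos_iff_eq_zero]
    convert measure_empty (μ := (volume : Measure (Fin (n + 2) → ℝ)))
    rw [eq_empty_iff_forall_notMem]
    rintro q ⟨-, hq⟩
    rw [mem_ofPred_eq, MeasurableEquiv.apply_symm_apply] at hq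
    exact hω hq
  rw [indicator_of_mem hω]
  refine (measure_mono ?_).trans (hφ ω hω)
  rintro q ⟨hq, -⟩ i
  obtain ⟨t, ht, htm⟩ := hq i
  refine ⟨t, ht, fun m => ?_, ?_⟩
  · have := htm (m + 1)
    rw [Function.iterate_succ_apply, topDeriv_succ, derivative_add, derivative_C, add_zero,
      MeasurableEquiv.apply_symm_apply, derivative_iterate_topPoly h] at this
    refine this.trans (le_of_eq ?_)
    ring
  · have := htm 0
    rw [Function.iterate_zero_apply, topDeriv_succ, MeasurableEquiv.apply_symm_apply, eval_add,
      eval_C, pow_zero, mul_one] at this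
    exact this

lemma volume_goodSet_succ_le {k n p : ℕ} (h : n + 1 ≤ k) (s A K : Fin p → ℝ)
    (φ : (WI n → ℝ) → ℝ≥0∞)
    (hφ : ∀ ω, volume {q : Fin (n + 2) → ℝ | ∀ i,
      ((k - (n + 1)).factorial : ℝ) * ∑ j, q j * s i ^ (j : ℕ) ∈
        constSet (topDeriv k n ω (s i)) (derivative^[k - (n + 1)] (topPoly k n ω (s i)))
          (A i) (K i)} ≤ φ ω) :
    volume (goodSet k (n + 1) s A K) ≤ ∫⁻ ω, φ ω := by
  have := volume_goodSet_succ_inter_le h s A K MeasurableSet.univ φ fun ω _ => hφ ω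
  simpa using this

end PhasePolynomials

section LayerCake

lemma gm_two_pow {p : ℕ} (m : Fin p → ℕ) :
    gm (fun i => (2 : ℝ) ^ m i) = ∏ i, ((2 : ℝ) ^ ((1 : ℝ) / p)) ^ m i := by
  refine Finset.prod_congr rfl fun i _ => ?_
  beta_reduce
  rw [← Real.rpow_natCast, ← Real.rpow_natCast, ← Real.rpow_mul zero_le_two,
    ← Real.rpow_mul zero_le_two, mul_comm]

lemma sum_prod_pow_le {p : ℕ} {r : ℝ} (hr0 : 0 ≤ r) (hr1 : r < 1) (S : Finset (Fin p → ℕ)) :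
    ∑ m ∈ S, ∏ i, r ^ m i ≤ ((1 - r)⁻¹) ^ p := by
  set N := S.sup (fun m => Finset.univ.sup m) + 1
  have hsub : S ⊆ Fintype.piFinset fun _ : Fin p => Finset.range N := by
    intro m hm
    rw [Fintype.mem_piFinset]
    intro i
    rw [Finset.mem_range]
    exact Nat.lt_succ_of_le ((Finset.le_sup (f := m) (Finset.mem_univ i)).trans
      (Finset.le_sup (f := fun m : Fin p → ℕ => Finset.univ.sup m) hm))
  refine (Finset.sum_le_sum_of_subset_of_nonneg hsub
    fun m _ _ => Finset.prod_nonneg fun i _ => pow_nonneg hr0 _).trans ?_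
  rw [Finset.sum_prod_piFinset (Finset.range N) fun _ j => r ^ j]
  rw [Finset.prod_const, Finset.card_univ, Fintype.card_fin]
  refine pow_le_pow_left₀ (Finset.sum_nonneg fun _ _ => pow_nonneg hr0 _) ?_ p
  rw [← tsum_geometric_of_lt_one hr0 hr1]
  exact (summable_geometric_of_lt_one hr0 hr1).sum_le_tsum _ fun _ _ => pow_nonneg hr0 _

/-- A product version of the layer-cake formula: a function bounded by a power of the geometric
mean of some quantities has controlled integral if the joint superlevel sets of these quantities
decay with a larger power. -/
lemma exists_lintegral_le_of_superlevel (p e : ℕ) (hp : p ≠ 0) : ∃ C : ℝ, 0 < C ∧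
    ∀ {Ω : Type} [MeasurableSpace Ω] (μ : Measure Ω) (b : ℕ) (_ : e < b)
      (u : Ω → Fin p → ℝ) (U : Fin p → ℝ) (E : (Fin p → ℝ) → Set Ω) (P M : ℝ) (φ : Ω → ℝ≥0∞)
      (_ : 0 ≤ P) (_ : 0 ≤ M)
      (_ : ∀ l : Fin p → ℝ, (∀ i, 1 ≤ l i ∧ l i ≤ U i) → MeasurableSet (E l))
      (_ : ∀ l : Fin p → ℝ, (∀ i, 1 ≤ l i ∧ l i ≤ U i) →
        μ (E l) ≤ ENNReal.ofReal (M * ((gm l)⁻¹) ^ b))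
      (_ : ∀ ω, φ ω = 0 ∨ ((∀ i, 1 ≤ u ω i ∧ u ω i ≤ U i) ∧
        (∀ l : Fin p → ℝ, (∀ i, 1 ≤ l i ∧ l i ≤ u ω i) → ω ∈ E l) ∧
        φ ω ≤ ENNReal.ofReal (P * gm (u ω) ^ e))),
      ∫⁻ ω, φ ω ∂μ ≤ ENNReal.ofReal (C * P * M) := by
  set r : ℝ := ((2 : ℝ) ^ ((1 : ℝ) / p))⁻¹ with hr
  have hp0 : (0 : ℝ) < p := by exact_mod_cast Nat.pos_of_ne_zero hp
  have h2 : 1 < (2 : ℝ) ^ ((1 : ℝ) / p) := Real.one_lt_rpow one_lt_two (by positivity)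
  have hr0 : 0 ≤ r := by positivity
  have hr1 : r < 1 := inv_lt_one_of_one_lt₀ h2
  have h1r : 0 < 1 - r := sub_pos.2 hr1
  refine ⟨2 ^ e * ((1 - r)⁻¹) ^ p, by positivity, ?_⟩
  intro Ω _ μ b heb u U E P M φ hP hM hE hμ hφ
  set pw : (Fin p → ℕ) → Fin p → ℝ := fun m i => 2 ^ m i with hpw
  have hpw1 : ∀ m i, 1 ≤ pw m i := fun m i => one_le_pow₀ one_le_two
  have hgm1 : ∀ m, 1 ≤ gm (pw m) := fun m => by
    rw [← gm_const hp zero_le_one]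
    exact gm_mono (fun _ => zero_le_one) (hpw1 m)
  set N : ℕ := ⌈∑ i, |U i|⌉₊ + 1
  set S : Finset (Fin p → ℕ) := {m ∈ Fintype.piFinset fun _ : Fin p => Finset.range N |
    ∀ i, pw m i ≤ U i} with hS
  have hSU : ∀ m ∈ S, ∀ i, 1 ≤ pw m i ∧ pw m i ≤ U i := fun m hm i =>
    ⟨hpw1 m i, (Finset.mem_filter.1 hm).2 i⟩
  have hpt : ∀ ω, φ ω ≤ ∑ m ∈ S, (E (pw m)).indicator
      (fun _ => ENNReal.ofReal (2 ^ e * P * gm (pw m) ^ e)) ω := by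
    intro ω
    rcases hφ ω with h0 | ⟨hu, hE', hle⟩
    · rw [h0]; exact zero_le
    choose m hm using fun i => exists_nat_pow_near (hu i).1 one_lt_two
    have hmU : ∀ i, pw m i ≤ U i := fun i => (hm i).1.trans (hu i).2
    have hmS : m ∈ S := by
      rw [hS, Finset.mem_filter, Fintype.mem_piFinset]
      refine ⟨fun i => Finset.mem_range.2 ?_, hmU⟩
      have h1 : (m i : ℝ) ≤ ∑ i, |U i| := by
        have h3 : (m i : ℝ) ≤ 2 ^ m i := by exact_mod_cast Nat.lt_two_pow_self.le
        exact (h3.trans (hmU i)).trans ((le_abs_self _).trans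
          (Finset.single_le_sum (f := fun i => |U i|) (fun _ _ => abs_nonneg _)
            (Finset.mem_univ i)))
      have h3 : (m i : ℝ) ≤ (⌈∑ i, |U i|⌉₊ : ℝ) := h1.trans (Nat.le_ceil _)
      exact Nat.lt_succ_of_le (by exact_mod_cast h3)
    refine le_trans ?_ (Finset.single_le_sum (f := fun m => (E (pw m)).indicator
      (fun _ => ENNReal.ofReal (2 ^ e * P * gm (pw m) ^ e)) ω) (fun _ _ => zero_le) hmS)
    have hmem : ω ∈ E (pw m) := hE' _ fun i => ⟨hpw1 m i, (hm i).1⟩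
    simp only [indicator_of_mem hmem]
    refine hle.trans (ENNReal.ofReal_le_ofReal ?_)
    have hgu : gm (u ω) ≤ 2 * gm (pw m) := by
      rw [← gm_const_mul hp zero_le_two fun i => zero_le_one.trans (hpw1 m i)]
      refine gm_mono (fun i => zero_le_one.trans (hu i).1) fun i => ?_
      have := (hm i).2.le
      rwa [pow_succ, mul_comm] at this
    calc P * gm (u ω) ^ e ≤ P * (2 * gm (pw m)) ^ e := by
          gcongr
          exact gm_nonneg fun i => zero_le_one.trans (hu i).1
      _ = 2 ^ e * P * gm (pw m) ^ e := by rw [mul_pow]; ring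
  refine (lintegral_mono hpt).trans ?_
  rw [lintegral_finsetSum' _ fun m hm =>
    (measurable_const.indicator (hE _ (hSU m hm))).aemeasurable]
  have hterm : ∀ m ∈ S, ∫⁻ ω, (E (pw m)).indicator
      (fun _ => ENNReal.ofReal (2 ^ e * P * gm (pw m) ^ e)) ω ∂μ ≤
      ENNReal.ofReal (2 ^ e * P * M * ∏ i, r ^ m i) := by
    intro m hm
    have h1 := hgm1 m
    have h0 : 0 < gm (pw m) := zero_lt_one.trans_le h1
    rw [lintegral_indicator_const (hE _ (hSU m hm))]
    refine (mul_le_mul_right (hμ _ (hSU m hm)) _).trans ?_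
    rw [← ENNReal.ofReal_mul (by positivity)]
    refine ENNReal.ofReal_le_ofReal ?_
    have h3 : gm (pw m) ^ e * ((gm (pw m))⁻¹) ^ b ≤ (gm (pw m))⁻¹ := by
      obtain ⟨c, rfl⟩ := Nat.exists_eq_add_of_lt heb
      rw [show e + c + 1 = e + (c + 1) by ring, pow_add, ← mul_assoc, ← mul_pow,
        mul_inv_cancel₀ h0.ne', one_pow, one_mul, pow_succ]
      exact mul_le_of_le_one_left (by positivity)
        (pow_le_one₀ (by positivity) (inv_le_one_of_one_le₀ h1))
    have h4 : (gm (pw m))⁻¹ = ∏ i, r ^ m i := by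
      rw [hpw, gm_two_pow, ← Finset.prod_inv_distrib]
      simp only [hr, inv_pow]
    rw [← h4]
    calc 2 ^ e * P * gm (pw m) ^ e * (M * (gm (pw m))⁻¹ ^ b)
        = 2 ^ e * P * M * (gm (pw m) ^ e * (gm (pw m))⁻¹ ^ b) := by ring
      _ ≤ _ := by gcongr
  refine (Finset.sum_le_sum hterm).trans ?_
  rw [← ENNReal.ofReal_sum_of_nonneg fun m _ => by positivity, ← Finset.mul_sum]
  refine ENNReal.ofReal_le_ofReal ?_
  calc 2 ^ e * P * M * ∑ m ∈ S, ∏ i, r ^ m i ≤ 2 ^ e * P * M * ((1 - r)⁻¹) ^ p := by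
        gcongr; exact sum_prod_pow_le hr0 hr1 S
    _ = _ := by ring

end LayerCake

section ConstantTerms

open Polynomial

lemma volume_le_of_forall_abs_sub_le {V : Set ℝ} {D : ℝ} (h : ∀ v ∈ V, ∀ w ∈ V, |v - w| ≤ D) :
    volume V ≤ ENNReal.ofReal D := by
  refine (Real.volume_le_diam _).trans (Metric.ediam_le fun x hx y hy => ?_)
  rw [edist_dist, Real.dist_eq]
  exact ENNReal.ofReal_le_ofReal (h x hx y hy)

lemma abs_eval_sub_eval_le {R : ℝ[X]} {S : Set ℝ} (hS : Convex ℝ S) {B : ℝ}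
    (h : ∀ x ∈ S, |(derivative R).eval x| ≤ B) {t t' : ℝ} (ht : t ∈ S) (ht' : t' ∈ S) :
    |R.eval t' - R.eval t| ≤ B * |t' - t| :=
  hS.norm_image_sub_le_of_norm_hasDerivWithin_le (f := fun x => R.eval x)
    (f' := fun x => (derivative R).eval x)
    (fun x _ => (R.hasDerivAt x).hasDerivWithinAt) h ht ht'

lemma abs_sub_le_of_mem {R : ℝ[X]} {A t t' v w D : ℝ} (h : |R.eval t + v| ≤ A)
    (h' : |R.eval t' + w| ≤ A) (hD : |R.eval t' - R.eval t| ≤ D) : |v - w| ≤ 2 * A + D := by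
  rw [abs_le] at *
  constructor <;> linarith [h.1, h.2, h'.1, h'.2, hD.1, hD.2]

/-- Taylor expansion bound on a short interval. -/
lemma abs_eval_le_of_derivatives_le {f : ℝ[X]} {d : ℕ} (hd : f.natDegree ≤ d) {B K t t0 : ℝ}
    (hB : 0 ≤ B) (h : ∀ m, |(derivative^[m] f).eval t0| ≤ B * K ^ m) (ht : |t - t0| * K ≤ 1)
    (hK : 0 ≤ K) :
    |f.eval t| ≤ (d + 1) * B := by
  rw [← taylor_eval_sub t0 f, eval_eq_sum_range' (n := d + 1)
    (by rw [natDegree_taylor]; omega)]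
  refine (Finset.abs_sum_le_sum_abs _ _).trans ?_
  have : ∀ m ∈ Finset.range (d + 1), |(taylor t0 f).coeff m * (t - t0) ^ m| ≤ B := by
    intro m _
    rw [taylor_coeff, abs_mul, abs_pow]
    have h1 : |(hasseDeriv m f).eval t0| ≤ B * K ^ m := by
      refine le_trans ?_ (h m)
      have h2 : (m.factorial • hasseDeriv m f).eval t0 = (derivative^[m] f).eval t0 :=
        congrArg (fun g => g.eval t0) (congrFun (factorial_smul_hasseDeriv (R := ℝ) m) f)
      rw [eval_smul, nsmul_eq_mul] at h2
      rw [← h2, abs_mul]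
      refine le_mul_of_one_le_left (abs_nonneg _) ?_
      rw [Nat.abs_cast]
      exact_mod_cast Nat.one_le_iff_ne_zero.2 m.factorial_ne_zero
    calc _ ≤ B * K ^ m * |t - t0| ^ m := by gcongr
      _ = B * (|t - t0| * K) ^ m := by rw [mul_pow]; ring
      _ ≤ B * 1 := by gcongr; exact pow_le_one₀ (by positivity) ht
      _ = B := mul_one _
  refine (Finset.sum_le_sum this).trans ?_
  simp

/-- The measure of the set of admissible constant terms is governed by a quantity which also
improves the control on the derivatives. -/
lemma exists_volume_constSet_le (d : ℕ) : ∃ C : ℝ, 2 ≤ C ∧ ∀ (f R : ℝ[X]), derivative R = f →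
    f.natDegree ≤ d → ∀ A K : ℝ, 0 < A → 1 ≤ K → constSet f R A K = ∅ ∨
      ∃ N : ℝ, 1 ≤ N ∧ N ≤ 2 * K ∧ volume (constSet f R A K) ≤ ENNReal.ofReal (C * A * N) ∧
        ∃ t ∈ Icc (0 : ℝ) 1, ∀ m, |(derivative^[m] f).eval t| ≤ C * A * K * (C * K / N) ^ m := by
  obtain ⟨C, hC1, hC⟩ := exists_forall_derivative_le d
  have hd0 : (0 : ℝ) ≤ d := Nat.cast_nonneg d
  refine ⟨2 * C + d + 3, by linarith, ?_⟩
  intro f R hR hf A K hA hK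
  rcases eq_empty_or_nonempty (constSet f R A K) with hV | hV
  · exact Or.inl hV
  right
  set n0 := ⌈K⌉₊ with hn0
  have hn0K : K ≤ n0 := Nat.le_ceil K
  have hn0K2 : (n0 : ℝ) ≤ 2 * K := by
    have := Nat.ceil_lt_add_one (zero_le_one.trans hK)
    linarith
  have hn0pos : (0 : ℝ) < n0 := by linarith
  have hn0pos' : 0 < n0 := by exact_mod_cast hn0pos
  set T : Set ℝ := {t ∈ Icc (0 : ℝ) 1 | ∀ m, |(derivative^[m] f).eval t| ≤ A * K * K ^ m} with hT
  set cell : ℕ → Set ℝ := fun j => Icc ((j : ℝ) / n0) ((j + 1) / n0) with hcell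
  classical
  set S := (Finset.range n0).filter (fun j => (T ∩ cell j).Nonempty) with hS
  have hcover : ∀ t ∈ T, ∃ j ∈ S, t ∈ cell j := by
    intro t ht
    have ht0 := ht.1.1
    have ht1 := ht.1.2
    by_cases h1 : t = 1
    · have hmem : t ∈ cell (n0 - 1) := by
        rw [hcell, h1]
        simp only [mem_Icc]
        rw [Nat.cast_sub hn0pos', Nat.cast_one, sub_add_cancel, div_self hn0pos.ne']
        exact ⟨by rw [div_le_one hn0pos]; linarith, le_rfl⟩
      exact ⟨n0 - 1, Finset.mem_filter.2 ⟨Finset.mem_range.2 (by omega), t, ht, hmem⟩, hmem⟩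
    · have hlt : t < 1 := lt_of_le_of_ne ht1 h1
      have hmem : t ∈ cell ⌊t * n0⌋₊ := by
        rw [hcell]
        simp only [mem_Icc]
        rw [div_le_iff₀ hn0pos, le_div_iff₀ hn0pos]
        exact ⟨Nat.floor_le (by positivity), (Nat.lt_floor_add_one _).le⟩
      refine ⟨⌊t * n0⌋₊, Finset.mem_filter.2 ⟨Finset.mem_range.2 ?_, t, ht, hmem⟩, hmem⟩
      rw [Nat.floor_lt (by positivity)]
      nlinarith
  have hcl : ∀ j, ∀ t ∈ cell j, ∀ t' ∈ cell j, |t - t'| ≤ 1 / n0 := by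
    intro j t ht t' ht'
    have : ((j : ℝ) + 1) / n0 = j / n0 + 1 / n0 := by ring
    rw [abs_le]
    constructor <;> linarith [ht.1, ht.2, ht'.1, ht'.2]
  have hsmall : ∀ j ∈ S, ∀ t ∈ cell j, |f.eval t| ≤ (d + 1) * (A * K) := by
    intro j hj t ht
    obtain ⟨t0, ht0, ht0'⟩ := (Finset.mem_filter.1 hj).2
    refine abs_eval_le_of_derivatives_le hf (by positivity) ht0.2 ?_ (by linarith)
    calc |t - t0| * K ≤ 1 / n0 * n0 := by gcongr; exact hcl j t ht t0 ht0'
      _ = 1 := by field_simp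
  have hVc : constSet f R A K ⊆ ⋃ j ∈ S, {v | ∃ t ∈ T ∩ cell j, |R.eval t + v| ≤ A} := by
    rintro v ⟨t, ht, h1, h2⟩
    obtain ⟨j, hj, hj'⟩ := hcover t ⟨ht, h1⟩
    exact mem_biUnion hj ⟨t, ⟨⟨ht, h1⟩, hj'⟩, h2⟩
  have hpiece : ∀ j ∈ S, volume {v | ∃ t ∈ T ∩ cell j, |R.eval t + v| ≤ A} ≤
      ENNReal.ofReal ((d + 3) * A) := by
    intro j hj
    refine volume_le_of_forall_abs_sub_le ?_
    rintro v ⟨t, ht, hv⟩ w ⟨t', ht', hw⟩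
    have h1 : |R.eval t' - R.eval t| ≤ (d + 1) * (A * K) * |t' - t| :=
      abs_eval_sub_eval_le (convex_Icc _ _) (by rw [hR]; exact hsmall j hj) ht.2 ht'.2
    have h2 : (d + 1) * (A * K) * |t' - t| ≤ (d + 1) * A := by
      calc (d + 1) * (A * K) * |t' - t| ≤ (d + 1) * (A * n0) * (1 / n0) := by
            gcongr; exact hcl j _ ht'.2 _ ht.2
        _ = (d + 1) * A := by field_simp
    have := abs_sub_le_of_mem hv hw (h1.trans h2)
    linarith
  have hN1 : 1 ≤ S.card := by
    obtain ⟨v, hv⟩ := hV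
    obtain ⟨j, hj⟩ := mem_iUnion.1 (hVc hv)
    obtain ⟨hj, -⟩ := mem_iUnion.1 hj
    exact Finset.card_pos.2 ⟨j, hj⟩
  have hN1' : (1 : ℝ) ≤ S.card := by exact_mod_cast hN1
  have hNn0 : (S.card : ℝ) ≤ n0 := by
    have := Finset.card_le_card (Finset.filter_subset
      (fun j => (T ∩ cell j).Nonempty) (Finset.range n0))
    rw [Finset.card_range] at this
    exact_mod_cast this
  refine ⟨S.card, hN1', hNn0.trans hn0K2, ?_, ?_⟩
  · refine (measure_mono hVc).trans ((measure_biUnion_finset_le _ _).trans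
      ((Finset.sum_le_sum hpiece).trans ?_))
    rw [Finset.sum_const, nsmul_eq_mul, ← ENNReal.ofReal_natCast,
      ← ENNReal.ofReal_mul (by positivity)]
    refine ENNReal.ofReal_le_ofReal ?_
    calc (S.card : ℝ) * ((d + 3) * A) = (d + 3) * A * S.card := by ring
      _ ≤ _ := by gcongr; linarith
  · have hvol : (S.card : ℝ) / n0 ≤
        volume.real {t ∈ Ioo (0 : ℝ) 1 | |f.eval t| ≤ (d + 1) * (A * K)} := by
      have hsub : (⋃ j ∈ S, Ioo ((j : ℝ) / n0) ((j + 1) / n0)) ⊆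
          {t ∈ Ioo (0 : ℝ) 1 | |f.eval t| ≤ (d + 1) * (A * K)} := by
        refine iUnion₂_subset fun j hj t ht => ⟨⟨?_, ?_⟩, hsmall j hj t (Ioo_subset_Icc_self ht)⟩
        · exact lt_of_le_of_lt (by positivity) ht.1
        · refine lt_of_lt_of_le ht.2 ?_
          rw [div_le_one hn0pos]
          exact_mod_cast Finset.mem_range.1 (Finset.mem_filter.1 hj).1
      have hdisj : (S : Set ℕ).PairwiseDisjoint fun j : ℕ => Ioo ((j : ℝ) / n0) ((j + 1) / n0) := by
        have key : ∀ i j : ℕ, i < j → Disjoint (Ioo ((i : ℝ) / n0) ((i + 1) / n0))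
            (Ioo ((j : ℝ) / n0) ((j + 1) / n0)) := by
          intro i j hij
          rw [Set.disjoint_left]
          intro t ht ht'
          have h1 := ht.2.trans' ht'.1
          rw [div_lt_div_iff_of_pos_right hn0pos] at h1
          have : j < i + 1 := by exact_mod_cast h1
          omega
        intro i _ j _ hij
        rcases lt_or_gt_of_ne hij with h | h
        · exact key i j h
        · exact (key j i h).symm
      have hfin : volume {t ∈ Ioo (0 : ℝ) 1 | |f.eval t| ≤ (d + 1) * (A * K)} ≠ ⊤ :=
        ((measure_mono (sep_subset _ _)).trans_lt measure_Ioo_lt_top).ne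
      refine le_trans (le_of_eq ?_) (measureReal_mono hsub hfin)
      rw [measureReal_biUnion_finset hdisj (fun j _ => measurableSet_Ioo)
        (fun j _ => measure_Ioo_lt_top.ne)]
      have : ∀ j ∈ S, volume.real (Ioo ((j : ℝ) / n0) ((j + 1) / n0)) = 1 / n0 := by
        intro j _
        rw [Real.volume_real_Ioo_of_le (by gcongr; linarith)]
        ring
      rw [Finset.sum_congr rfl this, Finset.sum_const, nsmul_eq_mul]
      ring
    obtain ⟨t, ht, htm⟩ := hC f hf _ _ (by positivity) (by positivity) hvol
    refine ⟨t, ht, fun m => (htm m).trans ?_⟩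
    have e1 : (d + 1) * (A * K) ≤ (2 * C + d + 3) * A * K := by
      rw [mul_assoc (2 * C + d + 3)]
      exact mul_le_mul_of_nonneg_right (by linarith) (by positivity)
    have e2 : C / (S.card / n0) ≤ (2 * C + d + 3) * K / S.card := by
      rw [div_div_eq_mul_div]
      have : C * n0 ≤ (2 * C + d + 3) * K := by nlinarith
      gcongr
    gcongr

end ConstantTerms

section GoodSetVolume

open Polynomial

/-- The volume bound for `goodSet`, uniform in the points `s i` and the bounds `A i`, `K i`. -/
def GoodSetVolumeBound (k n p : ℕ) : Prop :=
  ∃ C : ℝ, 0 < C ∧ ∀ (s A K : Fin p → ℝ) (η K0 : ℝ), 0 < η →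
    (∀ i j, i ≠ j → η ≤ |s i - s j|) → 2 ≤ K0 → (∀ i, 0 < A i) →
    (∀ i, 1 ≤ K i ∧ K i ≤ K0) →
    volume (goodSet k n s A K) ≤ ENNReal.ofReal (C * log K0 * (η⁻¹ ^ ((n + 2).choose 3) *
      gm A ^ ((n + 2).choose 2) * gm K ^ ((n + 2).choose 3 + 2)))

lemma lt_choose_three {n : ℕ} (hn : 2 ≤ n) : n < (n + 2).choose 3 := by
  induction n, hn using Nat.le_induction with
  | base => decide
  | succ n hn ih =>
    have h1 : (n + 1 + 2).choose 3 = (n + 2).choose 2 + (n + 2).choose 3 := rfl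
    have h2 : 0 < (n + 2).choose 2 := Nat.choose_pos (by omega)
    omega

lemma GoodSetVolumeBound.succ {k n p : ℕ} (hn : 2 ≤ n) (hk : n + 1 ≤ k) (hp : n + 2 ≤ p)
    (h : GoodSetVolumeBound k n p) : GoodSetVolumeBound k (n + 1) p := by
  have hp0 : p ≠ 0 := by omega
  obtain ⟨C₁, hC₁, h⟩ := h
  obtain ⟨C₂, hC₂, hconst⟩ := exists_volume_constSet_le k
  obtain ⟨C₃, hC₃, hlay⟩ := exists_lintegral_le_of_superlevel p (n + 2) hp0
  have hl2 : 0 < log 2 := log_pos one_lt_two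
  have hlC : 0 ≤ log C₂ := log_nonneg (by linarith)
  have hchoose : n < (n + 2).choose 3 := lt_choose_three hn
  have hch3 : (n + 1 + 2).choose 3 = (n + 2).choose 2 + (n + 2).choose 3 := rfl
  have hch2 : (n + 1 + 2).choose 2 = (n + 2) + (n + 2).choose 2 := by
    rw [show n + 1 + 2 = (n + 2) + 1 from rfl, Nat.choose_succ_succ' (n + 2) 1, Nat.choose_one_right]
  set a := (n + 2).choose 2 with ha
  set c := (n + 2).choose 3 with hc
  refine ⟨C₃ * C₂ ^ (n + 2) * (C₁ * (1 + log C₂ / log 2) * C₂ ^ a * C₂ ^ (c + 2)),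
    by positivity, ?_⟩
  intro s A K η K0 hη hsep hK0 hA hK
  have hKpos : ∀ i, 0 < K i := fun i => zero_lt_one.trans_le (hK i).1
  have hgA : 0 < gm A := gm_pos hA
  have hgK : 0 < gm K := gm_pos hKpos
  have hlK0 : log 2 ≤ log K0 := log_le_log two_pos hK0
  set φ : (WI n → ℝ) → ℝ≥0∞ := fun ω => volume {q : Fin (n + 2) → ℝ | ∀ i,
      ((k - (n + 1)).factorial : ℝ) * ∑ j, q j * s i ^ (j : ℕ) ∈
        constSet (topDeriv k n ω (s i)) (derivative^[k - (n + 1)] (topPoly k n ω (s i)))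
          (A i) (K i)} with hφ
  refine (volume_goodSet_succ_le hk s A K φ fun ω => le_rfl).trans ?_
  have hω : ∀ ω, ∃ u : Fin p → ℝ, φ ω = 0 ∨ ((∀ i, 1 ≤ u i ∧ u i ≤ 2 * K i) ∧
      (∀ l : Fin p → ℝ, (∀ i, 1 ≤ l i ∧ l i ≤ u i) →
        ω ∈ goodSet k n s (fun i => C₂ * (A i * K i)) (fun i => C₂ * (K i * (l i)⁻¹))) ∧
      φ ω ≤ ENNReal.ofReal ((η⁻¹ ^ a * (C₂ * gm A) ^ (n + 2)) * gm u ^ (n + 2))) := by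
    intro ω
    have hi := fun i => hconst (topDeriv k n ω (s i))
      (derivative^[k - (n + 1)] (topPoly k n ω (s i))) (derivative_iterate_topPoly hk _ _)
      (natDegree_topDeriv_le _ _ _ _) (A i) (K i) (hA i) (hK i).1
    by_cases hex : ∃ i, constSet (topDeriv k n ω (s i))
        (derivative^[k - (n + 1)] (topPoly k n ω (s i))) (A i) (K i) = ∅
    · obtain ⟨i, hi⟩ := hex
      refine ⟨0, Or.inl ?_⟩
      rw [hφ]
      convert measure_empty (μ := (volume : Measure (Fin (n + 2) → ℝ)))
      rw [eq_empty_iff_forall_notMem]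
      intro q hq
      have := hq i
      rw [hi] at this
      exact this
    · push Not at hex
      have hi' := fun i => (hi i).resolve_left (hex i).ne_empty
      choose u hu1 hu2 hu3 hu4 using hi'
      refine ⟨u, Or.inr ⟨fun i => ⟨hu1 i, hu2 i⟩, fun l hl i => ?_, ?_⟩⟩
      · obtain ⟨t, ht, htm⟩ := hu4 i
        refine ⟨t, ht, fun m => (htm m).trans ?_⟩
        have hl0 : 0 < l i := zero_lt_one.trans_le (hl i).1
        have h1 : C₂ * K i / u i ≤ C₂ * (K i * (l i)⁻¹) := by
          rw [← mul_assoc, ← div_eq_mul_inv]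
          have := hKpos i
          have := (hl i).2
          gcongr
        have := hu1 i
        have := hKpos i
        have := (hA i).le
        exact mul_le_mul (le_of_eq (by ring)) (pow_le_pow_left₀ (by positivity) h1 m)
          (by positivity) (by positivity)
      · have hu0 : ∀ i, 0 < u i := fun i => zero_lt_one.trans_le (hu1 i)
        refine (volume_forall_sum_pow_mem_le hp hp0 hη
          (by exact_mod_cast Nat.one_le_iff_ne_zero.2 (Nat.factorial_ne_zero _)) hsep _
          (v := fun i => C₂ * A i * u i)
          (fun i => by have := hA i; have := hu0 i; positivity) hu3).trans
          (ENNReal.ofReal_le_ofReal (le_of_eq ?_))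
        rw [gm_mul (fun i => by have := hA i; positivity) (fun i => (hu0 i).le),
          gm_const_mul hp0 (by positivity) (fun i => (hA i).le), mul_pow]
        ring
  choose u hu using hω
  have key := hlay volume (c + 2) (by omega) u (fun i => 2 * K i)
    (fun l => goodSet k n s (fun i => C₂ * (A i * K i)) (fun i => C₂ * (K i * (l i)⁻¹)))
    (η⁻¹ ^ a * (C₂ * gm A) ^ (n + 2))
    (C₁ * log (C₂ * K0) * (η⁻¹ ^ c * (C₂ * (gm A * gm K)) ^ a * (C₂ * gm K) ^ (c + 2))) φ
    (by positivity)
    (by have : 0 ≤ log (C₂ * K0) := log_nonneg (by nlinarith)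
        positivity)
    (fun l _ => (isClosed_goodSet _ _ _ _ _).measurableSet)
    (fun l hl => by
      have hl0 : ∀ i, 0 < l i := fun i => zero_lt_one.trans_le (hl i).1
      refine (h s _ _ η (C₂ * K0) hη hsep (by nlinarith)
        (fun i => by have := hA i; have := hKpos i; positivity)
        (fun i => ⟨?_, ?_⟩)).trans (ENNReal.ofReal_le_ofReal (le_of_eq ?_))
      · have := (hl i).2
        rw [← mul_assoc, ← div_eq_mul_inv, le_div_iff₀ (hl0 i)]
        nlinarith [hKpos i]
      · have h1 : (l i)⁻¹ ≤ 1 := inv_le_one_of_one_le₀ (hl i).1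
        have := (hK i).2
        have h2 : K i * (l i)⁻¹ ≤ K0 * 1 := by
          have := inv_pos.2 (hl0 i)
          gcongr
        rw [mul_one] at h2
        gcongr
      · rw [gm_const_mul hp0 (by positivity)
          (fun i => by have := hA i; have := hKpos i; positivity),
          gm_mul (fun i => (hA i).le) (fun i => (hKpos i).le),
          gm_const_mul hp0 (by positivity)
          (fun i => by have := hl0 i; have := hKpos i; positivity),
          gm_mul (fun i => (hKpos i).le) (fun i => (inv_pos.2 (hl0 i)).le)]
        have : gm (fun i => (l i)⁻¹) = (gm l)⁻¹ := by
          rw [gm, gm, ← Finset.prod_inv_distrib]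
          exact Finset.prod_congr rfl fun i _ => Real.inv_rpow (hl0 i).le _
        rw [this]
        ring)
    hu
  refine key.trans (ENNReal.ofReal_le_ofReal ?_)
  have hlog : log (C₂ * K0) ≤ (1 + log C₂ / log 2) * log K0 := by
    rw [log_mul (by linarith) (by linarith)]
    have : log C₂ ≤ log C₂ / log 2 * log K0 := by
      rw [div_mul_eq_mul_div, le_div_iff₀ hl2]
      gcongr
    linarith
  calc _ ≤ C₃ * (η⁻¹ ^ a * (C₂ * gm A) ^ (n + 2)) * (C₁ * ((1 + log C₂ / log 2) * log K0) *
        (η⁻¹ ^ c * (C₂ * (gm A * gm K)) ^ a * (C₂ * gm K) ^ (c + 2))) := by gcongr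
    _ = _ := by rw [hch3, hch2]; ring

end GoodSetVolume

section GoodSetVolumeBase

open Polynomial

lemma volume_abs_mul_le (w : ℝ) (hw : 1 ≤ w) (r : ℝ) :
    volume {ω : Fin 1 → ℝ | |w * ω 0| ≤ r} ≤ ENNReal.ofReal (2 * r) := by
  have hsub : {ω : Fin 1 → ℝ | |w * ω 0| ≤ r} ⊆ Set.pi univ fun _ => Icc (-r) r := by
    intro ω hω i _
    rw [Subsingleton.elim i 0, mem_Icc, ← abs_le]
    refine le_trans ?_ (show |w * ω 0| ≤ r from hω)
    rw [abs_mul]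
    exact le_mul_of_one_le_left (abs_nonneg _) (hw.trans (le_abs_self w))
  refine (measure_mono hsub).trans (le_of_eq ?_)
  rw [volume_pi_pi, Fin.prod_univ_one, Real.volume_Icc]
  ring_nf

/-- Vectors whose coefficient of the highest power is at most `r / k!`. -/
def topCoeffLe (k : ℕ) (r : ℝ) : Set (WI 0 → ℝ) := {ω | |(k.factorial : ℝ) * ω (0 : Fin 1)| ≤ r}

lemma measurableSet_topCoeffLe (k : ℕ) (r : ℝ) : MeasurableSet (topCoeffLe k r) :=
  ((measurable_pi_apply (0 : Fin 1)).const_mul _).norm measurableSet_Iic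

lemma one_le_factorial_cast (m : ℕ) : (1 : ℝ) ≤ m.factorial := by
  exact_mod_cast Nat.one_le_iff_ne_zero.2 m.factorial_ne_zero

lemma volume_topCoeffLe_le (k : ℕ) (r : ℝ) :
    volume (topCoeffLe k r) ≤ ENNReal.ofReal (2 * r) :=
  volume_abs_mul_le _ (one_le_factorial_cast k) r

lemma volume_goodSet_one_inter_le {k p : ℕ} (hk : 1 ≤ k) (hp : 2 ≤ p) {s A K : Fin p → ℝ} {η r : ℝ}
    (hη : 0 < η) (hsep : ∀ i j, i ≠ j → η ≤ |s i - s j|) (hA : ∀ i, 0 < A i) (hr : 0 ≤ r) :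
    volume (goodSet k 1 s A K ∩ {x | (splitWI 0 x).1 ∈ topCoeffLe k r}) ≤
      ENNReal.ofReal (η⁻¹ * gm (fun i => 2 * A i + r) ^ 2 * (2 * r)) := by
  refine (volume_goodSet_succ_inter_le hk s A K (measurableSet_topCoeffLe k r)
    (fun _ => ENNReal.ofReal (η⁻¹ * gm (fun i => 2 * A i + r) ^ 2)) fun ω hω => ?_).trans ?_
  · refine (volume_forall_sum_pow_mem_le hp (by omega) hη (one_le_factorial_cast _) hsep _
      (v := fun i => 2 * A i + r) (fun i => by have := hA i; positivity) fun i => ?_).trans_eq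
      (by simp)
    refine volume_le_of_forall_abs_sub_le ?_
    rintro v ⟨t, ht, -, hv⟩ w ⟨t', ht', -, hw⟩
    refine abs_sub_le_of_mem hv hw ?_
    have h1 := abs_eval_sub_eval_le (R := derivative^[k - (0 + 1)] (topPoly k 0 ω (s i))) (B := r)
      (convex_Icc (0 : ℝ) 1) (fun x _ => ?_) ht ht'
    · refine h1.trans (mul_le_of_le_one_right hr ?_)
      rw [abs_le]
      constructor <;> linarith [ht.1, ht.2, ht'.1, ht'.2]
    · rw [derivative_iterate_topPoly hk, topDeriv_zero, eval_C]
      exact hω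
  · rw [setLIntegral_const, ENNReal.ofReal_mul (p := η⁻¹ * gm (fun i => 2 * A i + r) ^ 2)
      (by positivity)]
    gcongr
    exact volume_topCoeffLe_le k r

lemma mem_topCoeffLe_of_mem_goodSet {k p : ℕ} (hk : 1 ≤ k) {s A K : Fin p → ℝ} {x : WI 1 → ℝ}
    (hx : x ∈ goodSet k 1 s A K) (i : Fin p) : (splitWI 0 x).1 ∈ topCoeffLe k (A i * K i) := by
  obtain ⟨t, -, h⟩ := hx i
  have := h 1
  rw [Function.iterate_one, topDeriv_succ, derivative_add, derivative_C, add_zero,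
    derivative_iterate_topPoly hk, topDeriv_zero, eval_C, pow_one] at this
  exact this

lemma exists_forall_le_and_le_gm {p : ℕ} (hp : p ≠ 0) {B : Fin p → ℝ} (hB : ∀ i, 0 < B i) :
    ∃ b, 0 < b ∧ (∀ i, b ≤ B i) ∧ b ≤ gm B ∧ ∃ i, b = B i := by
  have : Nonempty (Fin p) := ⟨⟨0, by omega⟩⟩
  obtain ⟨i, hi⟩ := Finite.exists_min B
  refine ⟨B i, hB i, hi, ?_, i, rfl⟩
  rw [← gm_const hp (hB i).le]
  exact gm_mono (fun _ => (hB i).le) hi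

lemma goodSetVolumeBound_one {k p : ℕ} (hk : 1 ≤ k) (hp : 2 ≤ p) : GoodSetVolumeBound k 1 p := by
  have hp0 : p ≠ 0 := by omega
  have hl2 : 0 < log 2 := log_pos one_lt_two
  refine ⟨18 / log 2, by positivity, ?_⟩
  intro s A K η K0 hη hsep hK0 hA hK
  have hlK0 : log 2 ≤ log K0 := log_le_log two_pos hK0
  have hKpos : ∀ i, 0 < K i := fun i => zero_lt_one.trans_le (hK i).1
  have hB : ∀ i, 0 < A i * K i := fun i => mul_pos (hA i) (hKpos i)
  have hAB : ∀ i, A i ≤ A i * K i := fun i => le_mul_of_one_le_right (hA i).le (hK i).1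
  obtain ⟨b, hb, hbB, hbg, i, hi⟩ := exists_forall_le_and_le_gm hp0 hB
  have hsub : goodSet k 1 s A K ⊆ goodSet k 1 s A K ∩ {x | (splitWI 0 x).1 ∈ topCoeffLe k b} := by
    intro x hx
    refine ⟨hx, ?_⟩
    rw [hi]
    exact mem_topCoeffLe_of_mem_goodSet hk hx i
  refine (measure_mono hsub).trans ((volume_goodSet_one_inter_le hk hp hη hsep hA hb.le).trans
    (ENNReal.ofReal_le_ofReal ?_))
  have h1 : gm (fun i => 2 * A i + b) ≤ 3 * gm (fun i => A i * K i) := by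
    rw [← gm_const_mul hp0 (by norm_num) (fun i => (hB i).le)]
    exact gm_mono (fun i => by have := hA i; positivity)
      fun i => by linarith [hAB i, hbB i]
  have h0 : 0 ≤ gm (fun i => 2 * A i + b) :=
    gm_nonneg fun i => by have := hA i; positivity
  have hgA : 0 < gm A := gm_pos hA
  have hgK : 0 < gm K := gm_pos hKpos
  calc η⁻¹ * gm (fun i => 2 * A i + b) ^ 2 * (2 * b)
      ≤ η⁻¹ * (3 * gm (fun i => A i * K i)) ^ 2 * (2 * gm (fun i => A i * K i)) := by gcongr
    _ = 18 / log 2 * log 2 * (η⁻¹ * gm A ^ 3 * gm K ^ 3) := by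
      rw [gm_mul (fun i => (hA i).le) (fun i => (hKpos i).le)]
      field_simp
      ring
    _ ≤ 18 / log 2 * log K0 * (η⁻¹ * gm A ^ 3 * gm K ^ 3) := by gcongr
    _ = _ := by simp [Nat.choose]

/-- The size of the set of admissible constant terms when the derivative is an affine function. -/
lemma volume_constSet_le_of_derivative_eq_C {f R : ℝ[X]} {c A K r : ℝ} (hR : derivative R = f)
    (hf : derivative f = C c) (hA : 0 < A) (hK : 1 ≤ K) (hr : 0 < r)
    (h : r ≤ A * K ∨ r / 2 < |c|) :
    volume (constSet f R A K) ≤ ENNReal.ofReal (8 * min (A * K) ((A * K) ^ 2 / r)) := by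
  set B := A * K with hB
  have hAB : A ≤ B := le_mul_of_one_le_right hA.le hK
  have hB0 : 0 < B := hA.trans_le hAB
  have hfeval : ∀ t t', f.eval t' - f.eval t = c * (t' - t) := by
    intro t t'
    have hd : derivative (f - C c * X) = 0 := by simp [hf]
    rw [derivative_eq_zero.1 hd |> eq_C_of_natDegree_eq_zero |>
      sub_eq_iff_eq_add.1]
    simp
    ring
  refine volume_le_of_forall_abs_sub_le ?_
  rintro v ⟨t, ht, hft, hv⟩ w ⟨t', ht', hft', hw⟩
  have hft0 : |f.eval t| ≤ B := by simpa using hft 0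
  have hft0' : |f.eval t'| ≤ B := by simpa using hft' 0
  have hc : |c| ≤ B * K := by
    have := hft 1
    rwa [Function.iterate_one, hf, eval_C, pow_one] at this
  have hconv : ∀ x ∈ segment ℝ t t', |f.eval x| ≤ B := by
    rintro x ⟨α, β, hα, hβ, hαβ, rfl⟩
    have h1 := hfeval t (α • t + β • t')
    have h2 := hfeval t t'
    have h3 : f.eval (α • t + β • t') = α * f.eval t + β * f.eval t' := by
      obtain rfl : α = 1 - β := by linarith
      simp only [smul_eq_mul] at *
      linear_combination h1 - β * h2
    rw [h3]
    rw [abs_le] at *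
    constructor <;> nlinarith [hft0.1, hft0.2, hft0'.1, hft0'.2]
  have hRv := abs_eval_sub_eval_le (R := R) (convex_segment t t') (by rw [hR]; exact hconv)
    (left_mem_segment ℝ t t') (right_mem_segment ℝ t t')
  have ht1 : |t' - t| ≤ 1 := by
    rw [abs_le]
    constructor <;> linarith [ht.1, ht.2, ht'.1, ht'.2]
  have hdiff := abs_sub_le_of_mem hv hw hRv
  have h3B : |v - w| ≤ 3 * B := by nlinarith
  rw [mul_min_of_nonneg _ _ (by norm_num)]
  refine le_min (by linarith) ?_
  rcases h with h | h
  · refine h3B.trans ?_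
    rw [mul_div_assoc', le_div_iff₀ hr]
    nlinarith
  · have hc0 : 0 < |c| := by linarith
    have h1 : |c| * |t' - t| ≤ 2 * B := by
      rw [← abs_mul, ← hfeval]
      refine (abs_sub _ _).trans (by linarith)
    have h2 : |c| * A ≤ B ^ 2 := by
      calc |c| * A ≤ B * K * A := by gcongr
        _ = B ^ 2 := by rw [hB]; ring
    rw [mul_div_assoc', le_div_iff₀ hr]
    have h4 : |v - w| * r ≤ |v - w| * (2 * |c|) := by gcongr; linarith
    have h5 : |v - w| * |c| ≤ 4 * B ^ 2 := by
      calc |v - w| * |c| ≤ (2 * A + B * |t' - t|) * |c| := by gcongr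
        _ = 2 * (|c| * A) + B * (|c| * |t' - t|) := by ring
        _ ≤ 2 * B ^ 2 + B * (2 * B) := by gcongr
        _ = 4 * B ^ 2 := by ring
    linarith

end GoodSetVolumeBase

section GoodSetVolumeTwo

open Polynomial

lemma derivative_topDeriv_one {k : ℕ} (hk : 1 ≤ k) (x : WI 1 → ℝ) (s : ℝ) :
    derivative (topDeriv k 1 x s) = C (k.factorial * (splitWI 0 x).1 (0 : Fin 1)) := by
  rw [topDeriv_succ, derivative_add, derivative_C, add_zero, derivative_iterate_topPoly hk,
    topDeriv_zero]

lemma exists_dyadic_le {b c K0 : ℝ} (hb : 0 < b) (hK0 : 2 ≤ K0) (hc : c ≤ b * K0) :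
    ∃ j ∈ Finset.range (⌈log K0 / log 2⌉₊ + 1), c ≤ b * 2 ^ j ∧ (j = 0 ∨ b * 2 ^ j / 2 < c) := by
  have hl2 : 0 < log 2 := log_pos one_lt_two
  have hM : c ≤ b * 2 ^ ⌈log K0 / log 2⌉₊ := by
    refine hc.trans ?_
    gcongr
    rw [← Real.log_le_log_iff (by linarith) (by positivity), Real.log_pow, ← div_le_iff₀ hl2]
    exact Nat.le_ceil _
  classical
  have hex : ∃ j, c ≤ b * 2 ^ j := ⟨_, hM⟩
  refine ⟨Nat.find hex, ?_, Nat.find_spec hex, ?_⟩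
  · have := Nat.find_min' hex hM
    rw [Finset.mem_range]
    omega
  · rcases Nat.eq_zero_or_pos (Nat.find hex) with h | h
    · exact Or.inl h
    · right
      have h1 := Nat.find_min hex (Nat.sub_lt h one_pos)
      rw [not_le] at h1
      refine lt_of_eq_of_lt ?_ h1
      obtain ⟨m, hm⟩ := Nat.exists_eq_add_of_lt h
      rw [hm]
      simp
      ring

lemma goodSetVolumeBound_two {k p : ℕ} (hk : 2 ≤ k) (hp : 3 ≤ p) : GoodSetVolumeBound k 2 p := by
  have hp0 : p ≠ 0 := by omega
  have hl2 : 0 < log 2 := log_pos one_lt_two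
  refine ⟨9216 * (3 / log 2), by positivity, ?_⟩
  intro s A K η K0 hη hsep hK0 hA hK
  have hlK0 : log 2 ≤ log K0 := log_le_log two_pos hK0
  have hKpos : ∀ i, 0 < K i := fun i => zero_lt_one.trans_le (hK i).1
  set B : Fin p → ℝ := fun i => A i * K i with hBdef
  have hB : ∀ i, 0 < B i := fun i => mul_pos (hA i) (hKpos i)
  obtain ⟨b, hb, hbB, hbg, i₀, hi₀⟩ := exists_forall_le_and_le_gm hp0 hB
  have hgB : 0 < gm B := gm_pos hB
  set r : ℕ → ℝ := fun j => b * 2 ^ j with hr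
  have hr0 : ∀ j, 0 < r j := fun j => by positivity
  set mn : ℕ → Fin p → ℝ := fun j i => min (B i) (B i ^ 2 / r j) with hmn
  have hmn0 : ∀ j i, 0 < mn j i := fun j i => lt_min (hB i) (div_pos (pow_pos (hB i) 2) (hr0 j))
  set E : ℕ → Set (WI 1 → ℝ) := fun j =>
    goodSet k 1 s B K ∩ {x | (splitWI 0 x).1 ∈ topCoeffLe k (r j)} with hE
  have hEm : ∀ j, MeasurableSet (E j) := fun j =>
    (isClosed_goodSet _ _ _ _ _).measurableSet.inter
      (measurable_fst.comp (splitWI 0).measurable (measurableSet_topCoeffLe k (r j)))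
  set M : ℕ := ⌈log K0 / log 2⌉₊ with hM
  set P : ℕ → ℝ := fun j => η⁻¹ ^ 3 * gm (fun i => 8 * mn j i) ^ 3 with hP
  refine (volume_goodSet_succ_le (n := 1) hk s A K
    (fun ω => ∑ j ∈ Finset.range (M + 1), (E j).indicator (fun _ => ENNReal.ofReal (P j)) ω)
    fun ω => ?_).trans ?_
  · by_cases hex : ∃ i, constSet (topDeriv k 1 ω (s i))
        (derivative^[k - (1 + 1)] (topPoly k 1 ω (s i))) (A i) (K i) = ∅
    · obtain ⟨i, hi⟩ := hex
      refine le_trans (le_of_eq ?_) zero_le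
      convert measure_empty (μ := (volume : Measure (Fin (1 + 2) → ℝ)))
      rw [eq_empty_iff_forall_notMem]
      intro q hq
      have := hq i
      rw [hi] at this
      exact this
    · push Not at hex
      have hω : ω ∈ goodSet k 1 s B K := fun i => by
        obtain ⟨v, t, ht, h, -⟩ := hex i
        exact ⟨t, ht, h⟩
      set c := (k.factorial : ℝ) * (splitWI 0 ω).1 (0 : Fin 1) with hc
      have hcb : |c| ≤ b * K0 := by
        refine (mem_topCoeffLe_of_mem_goodSet (by omega) hω i₀).trans ?_
        rw [← hi₀]
        have := (hK i₀).2
        gcongr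
      obtain ⟨j, hj, hj1, hj2⟩ := exists_dyadic_le hb hK0 hcb
      refine le_trans ?_ (Finset.single_le_sum (fun _ _ => zero_le) hj)
      rw [indicator_of_mem (show ω ∈ E j from ⟨hω, hj1⟩)]
      refine volume_forall_sum_pow_mem_le hp hp0 hη (one_le_factorial_cast _) hsep _
        (v := fun i => 8 * mn j i) (fun i => by have := hmn0 j i; positivity) fun i => ?_
      refine volume_constSet_le_of_derivative_eq_C (derivative_iterate_topPoly hk _ _)
        (derivative_topDeriv_one (by omega) _ _) (hA i) (hK i).1 (hr0 j) ?_
      rcases hj2 with hj2 | hj2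
      · left
        simp only [hr, hj2, pow_zero, mul_one]
        exact hbB i
      · exact Or.inr hj2
  · rw [lintegral_finsetSum _ fun j _ => measurable_const.indicator (hEm j)]
    have hterm : ∀ j ∈ Finset.range (M + 1),
        ∫⁻ ω, (E j).indicator (fun _ => ENNReal.ofReal (P j)) ω ≤
        ENNReal.ofReal (9216 * (η⁻¹ ^ 4 * gm B ^ 6)) := by
      intro j _
      have hP0 : 0 ≤ P j := by
        have := gm_nonneg (v := fun i => 8 * mn j i) fun i => by have := hmn0 j i; positivity
        positivity
      rw [lintegral_indicator_const (hEm j)]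
      refine (mul_le_mul_right (volume_goodSet_one_inter_le (by omega) (by omega) hη hsep hB
        (hr0 j).le) _).trans ?_
      rw [← ENNReal.ofReal_mul hP0]
      refine ENNReal.ofReal_le_ofReal ?_
      set G := gm (mn j) with hG
      set H := gm (fun i => 2 * B i + r j) with hH
      have hG0 : 0 ≤ G := gm_nonneg fun i => (hmn0 j i).le
      have hH0 : 0 ≤ H := gm_nonneg fun i => by have := hB i; have := hr0 j; positivity
      have h1 : H * G ≤ 3 * gm B ^ 2 := by
        rw [← gm_mul (fun i => by have := hB i; have := hr0 j; positivity)
          (fun i => (hmn0 j i).le), ← gm_pow (fun i => (hB i).le),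
          ← gm_const_mul hp0 (by norm_num) (fun i => by positivity)]
        refine gm_mono (fun i => by
          have := hB i; have := hr0 j; have := (hmn0 j i).le; positivity) fun i => ?_
        have e1 : B i * mn j i ≤ B i * B i := by
          have := (hB i).le
          gcongr
          exact min_le_left _ _
        have e2 : r j * mn j i ≤ B i ^ 2 := by
          calc r j * mn j i ≤ r j * (B i ^ 2 / r j) := by
                have := (hr0 j).le
                gcongr
                exact min_le_right _ _
            _ = B i ^ 2 := by have := (hr0 j).ne'; field_simp
        nlinarith
      have h2 : r j * G ≤ gm B ^ 2 := by
        rw [← gm_const_mul hp0 (hr0 j).le (fun i => (hmn0 j i).le), ← gm_pow (fun i => (hB i).le)]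
        refine gm_mono (fun i => by have := hr0 j; have := (hmn0 j i).le; positivity) fun i => ?_
        calc r j * mn j i ≤ r j * (B i ^ 2 / r j) := by
              have := (hr0 j).le
              gcongr
              exact min_le_right _ _
          _ = B i ^ 2 := by have := (hr0 j).ne'; field_simp
      have h8 : gm (fun i => 8 * mn j i) = 8 * G :=
        gm_const_mul hp0 (by norm_num) (fun i => (hmn0 j i).le)
      have := hr0 j
      calc P j * (η⁻¹ * H ^ 2 * (2 * r j))
          = 1024 * η⁻¹ ^ 4 * ((H * G) ^ 2 * (r j * G)) := by rw [hP]; simp only [h8]; ring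
        _ ≤ 1024 * η⁻¹ ^ 4 * ((3 * gm B ^ 2) ^ 2 * (gm B ^ 2)) := by gcongr
        _ = 9216 * (η⁻¹ ^ 4 * gm B ^ 6) := by ring
    refine (Finset.sum_le_sum hterm).trans ?_
    rw [Finset.sum_const, Finset.card_range, nsmul_eq_mul, ← ENNReal.ofReal_natCast,
      ← ENNReal.ofReal_mul (by positivity)]
    refine ENNReal.ofReal_le_ofReal ?_
    have hM1 : ((M + 1 : ℕ) : ℝ) ≤ 3 / log 2 * log K0 := by
      have h1 := Nat.ceil_lt_add_one (a := log K0 / log 2)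
        (div_nonneg (hl2.le.trans hlK0) hl2.le)
      have h2 : 1 ≤ log K0 / log 2 := by rwa [le_div_iff₀ hl2, one_mul]
      push_cast
      calc (M : ℝ) + 1 ≤ 3 * (log K0 / log 2) := by linarith
        _ = _ := by ring
    have hgm : gm B = gm A * gm K := gm_mul (fun i => (hA i).le) (fun i => (hKpos i).le)
    have hgA : 0 < gm A := gm_pos hA
    have hgK : 0 < gm K := gm_pos hKpos
    calc _ ≤ 3 / log 2 * log K0 * (9216 * (η⁻¹ ^ 4 * gm B ^ 6)) := by gcongr
      _ = 9216 * (3 / log 2) * log K0 * (η⁻¹ ^ 4 * gm A ^ 6 * gm K ^ 6) := by rw [hgm]; ring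
      _ = _ := by simp [Nat.choose]

lemma goodSetVolumeBound {k n p : ℕ} (hn : 1 ≤ n) (hk : n ≤ k) (hp : n + 1 ≤ p) :
    GoodSetVolumeBound k n p := by
  rcases hn.eq_or_lt with rfl | h1
  · exact goodSetVolumeBound_one hk hp
  induction n, h1 using Nat.le_induction with
  | base => exact goodSetVolumeBound_two hk hp
  | succ n h2 ih => exact (ih (by omega) (by omega) (by omega)).succ h2 hk hp

end GoodSetVolumeTwo

section InnerIntegral

open Polynomial

/-- The integral over `ξ₂` of the part of the phase of degree `n + 1` that depends on `ξ₂`, as a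
function of the coefficients and of `ξ₁ = s`. -/
def innerInt (n : ℕ) (x : WI n → ℝ) (s : ℝ) : ℂ :=
  ∫ t in (0 : ℝ)..1, ex ((topPoly (n + 1) n x s).eval t)

lemma continuous_innerInt (n : ℕ) :
    Continuous fun z : (WI n → ℝ) × ℝ => innerInt n z.1 z.2 := by
  refine intervalIntegral.continuous_parametric_intervalIntegral_of_continuous' ?_ 0 1
  exact continuous_ex.comp (continuous_eval_iterate_derivative_topPoly (n + 1) n 0)

lemma norm_innerInt_le_one (n : ℕ) (x : WI n → ℝ) (s : ℝ) : ‖innerInt n x s‖ ≤ 1 := by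
  refine (intervalIntegral.norm_integral_le_of_norm_le_const (C := 1)
    fun t _ => (norm_ex _).le).trans ?_
  simp

lemma exists_volume_forall_le_norm_innerInt_le {n : ℕ} (hn : 1 ≤ n) :
    ∃ C D : ℝ, 0 < C ∧ 2 ≤ D ∧ ∀ (s δ : Fin (n + 1) → ℝ) (η τ : ℝ), 0 < η →
      (∀ i j, i ≠ j → η ≤ |s i - s j|) → 0 < τ → (∀ i, τ ≤ δ i ∧ δ i ≤ 1) →
      volume {x : WI n → ℝ | ∀ i, δ i ≤ ‖innerInt n x (s i)‖} ≤
        ENNReal.ofReal (C * log (D / τ) * η⁻¹ ^ ((n + 2).choose 3) *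
          (gm δ)⁻¹ ^ ((n + 3).choose 3 + 2)) := by
  obtain ⟨C₁, hC₁, h⟩ := goodSetVolumeBound (k := n + 1) hn (by omega) le_rfl
  obtain ⟨C₂, hC₂, hder⟩ := exists_derivative_le_of_le_norm_integral (n + 1)
  have hch : (n + 3).choose 3 = (n + 2).choose 2 + (n + 2).choose 3 := rfl
  refine ⟨C₁ * (C₂ + 1) ^ ((n + 2).choose 2 + (n + 2).choose 3 + 2), C₂ + 1, by positivity,
    by linarith, ?_⟩
  intro s δ η τ hη hsep hτ hδ
  have hδ0 : ∀ i, 0 < δ i := fun i => hτ.trans_le (hδ i).1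
  have hsub : {x : WI n → ℝ | ∀ i, δ i ≤ ‖innerInt n x (s i)‖} ⊆
      goodSet (n + 1) n s (fun i => (C₂ + 1) * (δ i)⁻¹) (fun i => (C₂ + 1) * (δ i)⁻¹) := by
    intro x hx i
    obtain ⟨t, ht, htm⟩ := hder _ (natDegree_topPoly_le _ _ _ _) (δ i) (hδ0 i) (hx i)
    refine ⟨t, ht, fun m => ?_⟩
    rw [topDeriv, Nat.add_sub_cancel_left, Function.iterate_one]
    refine (htm m).trans ?_
    have := hδ0 i
    simp only [div_eq_mul_inv]
    gcongr <;> linarith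
  have h1 : ∀ i, 1 ≤ (δ i)⁻¹ := fun i => (one_le_inv₀ (hδ0 i)).2 (hδ i).2
  have hinv : gm (fun i => (δ i)⁻¹) = (gm δ)⁻¹ := by
    rw [gm, gm, ← Finset.prod_inv_distrib]
    exact Finset.prod_congr rfl fun i _ => Real.inv_rpow (hδ0 i).le _
  have hτ1 : 1 ≤ τ⁻¹ := (one_le_inv₀ hτ).2 ((hδ 0).1.trans (hδ 0).2)
  refine (measure_mono hsub).trans ((h s _ _ η ((C₂ + 1) / τ) hη hsep ?_ (fun i => ?_)
    fun i => ⟨?_, ?_⟩).trans (ENNReal.ofReal_le_ofReal (le_of_eq ?_)))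
  · rw [div_eq_mul_inv]; nlinarith
  · have := hδ0 i; positivity
  · nlinarith [h1 i]
  · rw [div_eq_mul_inv]
    have := hδ i
    gcongr
    exact this.1
  · rw [gm_const_mul (by omega) (by linarith) (fun i => (inv_pos.2 (hδ0 i)).le), hinv, hch, mul_pow, mul_pow]
    ring

/-- `z` if `τ ≤ ‖z‖`, and `0` otherwise. -/
def cut (τ : ℝ) (z : ℂ) : ℂ := {z : ℂ | τ ≤ ‖z‖}.indicator id z

lemma measurable_cut (τ : ℝ) : Measurable (cut τ) :=
  measurable_id.indicator (measurableSet_le measurable_const measurable_norm)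

lemma norm_cut_le (τ : ℝ) (z : ℂ) : ‖cut τ z‖ ≤ ‖z‖ := norm_indicator_le_norm_self _ _

lemma norm_sub_cut_le {τ : ℝ} (hτ : 0 ≤ τ) (z : ℂ) : ‖z - cut τ z‖ ≤ τ := by
  unfold cut
  by_cases h : τ ≤ ‖z‖
  · rw [indicator_of_mem (by exact h)]; simpa
  · rw [indicator_of_notMem (by exact h), sub_zero]; exact (not_le.1 h).le

lemma cut_eq_self {τ : ℝ} {z : ℂ} (h : τ ≤ ‖z‖) : cut τ z = z :=
  indicator_of_mem (s := {z : ℂ | τ ≤ ‖z‖}) h _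

lemma cut_eq_zero {τ : ℝ} {z : ℂ} (h : ‖z‖ < τ) : cut τ z = 0 :=
  indicator_of_notMem (s := {z : ℂ | τ ≤ ‖z‖}) (not_le.2 h) _

lemma two_mul_lt_choose_three {n : ℕ} (hn : 1 ≤ n) : 2 * (n + 1) < (n + 3).choose 3 + 2 := by
  induction n, hn using Nat.le_induction with
  | base => decide
  | succ n hn ih =>
    have h1 : (n + 1 + 3).choose 3 = (n + 3).choose 2 + (n + 3).choose 3 := rfl
    have h2 : (n + 3).choose 2 = (n + 2).choose 1 + (n + 2).choose 2 := rfl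
    rw [Nat.choose_one_right] at h2
    omega

lemma exists_lintegral_prod_cut_innerInt_le {n : ℕ} (hn : 1 ≤ n) :
    ∃ C D : ℝ, 0 < C ∧ 2 ≤ D ∧ ∀ (s : Fin (n + 1) → ℝ) (η τ : ℝ), 0 < η →
      (∀ i j, i ≠ j → η ≤ |s i - s j|) → 0 < τ → τ ≤ 1 →
      ∫⁻ x : WI n → ℝ, ∏ i, ‖cut τ (innerInt n x (s i))‖ₑ ^ 2 ≤
        ENNReal.ofReal (C * log (D / τ) * η⁻¹ ^ ((n + 2).choose 3) *
          (τ⁻¹ ^ ((n + 3).choose 3 + 2) * τ ^ (2 * (n + 1)))) := by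
  obtain ⟨C₁, D, hC₁, hD, h⟩ := exists_volume_forall_le_norm_innerInt_le hn
  obtain ⟨C₂, hC₂, hlay⟩ := exists_lintegral_le_of_superlevel (n + 1) (2 * (n + 1)) (by omega)
  refine ⟨C₁ * C₂, D, by positivity, hD, ?_⟩
  intro s η τ hη hsep hτ hτ1
  have hlog : 0 ≤ log (D / τ) := log_nonneg (by rw [le_div_iff₀ hτ]; linarith)
  refine (hlay volume _ (two_mul_lt_choose_three hn) (fun x i => ‖innerInt n x (s i)‖ * τ⁻¹)
    (fun _ => τ⁻¹) (fun l => {x | ∀ i, l i * τ ≤ ‖innerInt n x (s i)‖}) (τ ^ (2 * (n + 1)))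
    (C₁ * log (D / τ) * η⁻¹ ^ ((n + 2).choose 3) * τ⁻¹ ^ ((n + 3).choose 3 + 2))
    _ (by positivity) (by positivity) ?_ ?_ ?_).trans (ENNReal.ofReal_le_ofReal (le_of_eq ?_))
  · intro l _
    rw [ofPred_forall]
    refine MeasurableSet.iInter fun i => measurableSet_le measurable_const ?_
    exact ((continuous_innerInt n).comp
      (Continuous.prodMk continuous_id continuous_const)).norm.measurable
  · intro l hl
    have hl0 : ∀ i, 0 < l i := fun i => zero_lt_one.trans_le (hl i).1
    refine (h s (fun i => l i * τ) η τ hη hsep hτ fun i => ⟨?_, ?_⟩).trans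
      (ENNReal.ofReal_le_ofReal (le_of_eq ?_))
    · exact le_mul_of_one_le_left hτ.le (hl i).1
    · calc l i * τ ≤ τ⁻¹ * τ := by have := (hl i).2; gcongr
        _ = 1 := inv_mul_cancel₀ hτ.ne'
    · rw [gm_mul (fun i => (hl0 i).le) (fun _ => hτ.le), gm_const (by omega) hτ.le, mul_inv,
        mul_pow]
      ring
  · intro x
    by_cases hx : ∃ i, ‖innerInt n x (s i)‖ < τ
    · obtain ⟨i, hi⟩ := hx
      left
      refine Finset.prod_eq_zero (Finset.mem_univ i) ?_
      rw [cut_eq_zero hi]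
      simp
    · push Not at hx
      right
      refine ⟨fun i => ⟨?_, ?_⟩, fun l hl i => ?_, ?_⟩
      · rw [← div_eq_mul_inv, le_div_iff₀ hτ, one_mul]; exact hx i
      · exact mul_le_of_le_one_left (by positivity) (norm_innerInt_le_one _ _ _)
      · calc l i * τ ≤ ‖innerInt n x (s i)‖ * τ⁻¹ * τ := by have := (hl i).2; gcongr
          _ = ‖innerInt n x (s i)‖ := by field_simp
      · have h0 : ∀ i, 0 ≤ ‖innerInt n x (s i)‖ := fun i => norm_nonneg _
        have hc : ∀ i, ‖cut τ (innerInt n x (s i))‖ₑ ^ 2 =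
            ENNReal.ofReal (‖innerInt n x (s i)‖ ^ 2) := fun i => by
          rw [cut_eq_self (hx i), ← ofReal_norm, ENNReal.ofReal_pow (h0 i)]
        rw [Finset.prod_congr rfl fun i _ => hc i,
          ← ENNReal.ofReal_prod_of_nonneg fun i _ => by positivity]
        refine ENNReal.ofReal_le_ofReal (le_of_eq ?_)
        rw [gm_mul h0 (fun _ => by positivity), gm_const (by omega) (by positivity), mul_pow,
          Finset.prod_pow, ← gm_pow_card (by omega) h0]
        rw [mul_left_comm, ← mul_pow, mul_inv_cancel₀ hτ.ne', one_pow, mul_one, ← pow_mul,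
          mul_comm 2]
  · ring

end InnerIntegral

section Plancherel

open FourierTransform SchwartzMap

variable {V : Type*} [NormedAddCommGroup V] [InnerProductSpace ℝ V] [FiniteDimensional ℝ V]
  [MeasurableSpace V] [BorelSpace V]

lemma fourier_ae_eq_coeFn_fourier_toLp {H : V → ℂ} (h1 : Integrable H) (h2 : MemLp H 2) :
    ∀ᵐ y, 𝓕 H y = (𝓕 (h2.toLp H) : Lp ℂ 2 (volume : Measure V)) y := by
  have hc : Continuous (𝓕 H) := VectorFourier.fourierIntegral_continuous
    Real.continuous_fourierChar (continuous_inner (𝕜 := ℝ)) h1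
  refine ae_eq_of_integral_contDiff_smul_eq hc.locallyIntegrable
    ((Lp.memLp _).locallyIntegrable one_le_two) fun g hg hgs => ?_
  have hcs : HasCompactSupport (fun x => (g x : ℂ)) := hgs.comp_left Complex.ofReal_zero
  set G : 𝓢(V, ℂ) := hcs.toSchwartzMap (Complex.ofRealCLM.contDiff.comp hg) with hG
  have hGx : ∀ x, G x = g x := fun x => rfl
  have e1 : ∫ x, g x • (𝓕 (h2.toLp H) : Lp ℂ 2 (volume : Measure V)) x =
      ((𝓕 (h2.toLp H) : Lp ℂ 2 (volume : Measure V)) : 𝓢'(V, ℂ)) G := by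
    rw [Lp.toTemperedDistribution_apply]
    rfl
  rw [e1, ← Lp.fourier_toTemperedDistribution_eq, TemperedDistribution.fourier_apply,
    Lp.toTemperedDistribution_apply]
  have e2 : ∫ x, (𝓕 G) x • (h2.toLp H) x = ∫ x, (𝓕 G) x • H x := by
    refine integral_congr_ae ?_
    filter_upwards [h2.coeFn_toLp] with x hx
    rw [hx]
  rw [e2]
  have h := VectorFourier.integral_fourierIntegral_smul_eq_flip (L := innerₗ V)
    Real.continuous_fourierChar (continuous_inner (𝕜 := ℝ)) (G.integrable (μ := volume)) h1
  rw [flip_innerₗ] at h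
  exact h.symm

lemma lintegral_enorm_fourier_sq {H : V → ℂ} (h1 : Integrable H) (h2 : MemLp H 2) :
    ∫⁻ y, ‖𝓕 H y‖ₑ ^ 2 = ∫⁻ x, ‖H x‖ₑ ^ 2 := by
  have e : ∀ f : V → ℂ, ∫⁻ y, ‖f y‖ₑ ^ 2 = eLpNorm f 2 ^ 2 := by
    intro f
    rw [eLpNorm_eq_lintegral_rpow_enorm_toReal two_ne_zero ENNReal.ofNat_ne_top,
      ← ENNReal.rpow_natCast, ← ENNReal.rpow_mul]
    simp
  rw [e, e, eLpNorm_congr_ae (fourier_ae_eq_coeFn_fourier_toLp h1 h2), ← Lp.enorm_def,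
    ← eLpNorm_congr_ae h2.coeFn_toLp, ← Lp.enorm_def, ← ofReal_norm, ← ofReal_norm,
    Lp.norm_fourier_eq]

end Plancherel

section PlancherelPi

open FourierTransform

lemma memLp_two_iff_lintegral_lt_top {α : Type*} [MeasurableSpace α] {μ : Measure α} {H : α → ℂ}
    (hm : AEStronglyMeasurable H μ) : MemLp H 2 μ ↔ ∫⁻ x, ‖H x‖ₑ ^ 2 ∂μ < ∞ := by
  rw [MemLp, and_iff_right hm,
    eLpNorm_lt_top_iff_lintegral_rpow_enorm_lt_top two_ne_zero ENNReal.ofNat_ne_top]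
  simp

lemma lintegral_enorm_integral_mul_ex_sq {p : ℕ} {H : (Fin p → ℝ) → ℂ} (h1 : Integrable H)
    (h2 : ∫⁻ x, ‖H x‖ₑ ^ 2 < ∞) :
    ∫⁻ y : Fin p → ℝ, ‖∫ x, H x * ex (∑ j, y j * x j)‖ₑ ^ 2 = ∫⁻ x, ‖H x‖ₑ ^ 2 := by
  have hp := PiLp.volume_preserving_ofLp (Fin p)
  have he : MeasurableEmbedding (WithLp.ofLp : EuclideanSpace ℝ (Fin p) → Fin p → ℝ) :=
    (MeasurableEquiv.toLp 2 (Fin p → ℝ)).symm.measurableEmbedding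
  have h1' : Integrable (H ∘ WithLp.ofLp : EuclideanSpace ℝ (Fin p) → ℂ) :=
    (hp.integrable_comp_emb he).2 h1
  have key := lintegral_enorm_fourier_sq h1'
    ((memLp_two_iff_lintegral_lt_top h1'.1).2 (by
      rw [← hp.lintegral_comp_emb he] at h2; exact h2))
  have hR : ∫⁻ x : EuclideanSpace ℝ (Fin p), ‖(H ∘ WithLp.ofLp) x‖ₑ ^ 2 = ∫⁻ x, ‖H x‖ₑ ^ 2 :=
    hp.lintegral_comp_emb he fun x => ‖H x‖ₑ ^ 2
  rw [hR] at key
  rw [← key, ← hp.lintegral_comp_emb he, ← lintegral_neg_eq_self]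
  refine lintegral_congr fun y => ?_
  rw [Real.fourier_eq', ← hp.integral_comp he]
  congr 2
  refine integral_congr_ae (ae_of_all _ fun x => ?_)
  simp only [ex, Function.comp, smul_eq_mul]
  rw [mul_comm]
  congr 2
  rw [PiLp.inner_apply]
  simp [Finset.mul_sum, mul_comm]
  exact Finset.sum_congr rfl fun i _ => by ring

end PlancherelPi

lemma lintegral_enorm_setIntegral_mul_ex_comp_sq_le {p : ℕ} {Φ : (Fin p → ℝ) → Fin p → ℝ}
    {Φ' : (Fin p → ℝ) → (Fin p → ℝ) →L[ℝ] Fin p → ℝ} {S : Set (Fin p → ℝ)}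
    (hS : MeasurableSet S) (hΦ : ∀ s ∈ S, HasFDerivWithinAt Φ (Φ' s) S s) (hinj : InjOn Φ S)
    {c : ℝ} (hc : 0 < c) (hdet : ∀ s ∈ S, c ≤ |(Φ' s).det|) {G : (Fin p → ℝ) → ℂ}
    (hG : IntegrableOn G S) (hG2 : ∫⁻ s in S, ‖G s‖ₑ ^ 2 < ∞) :
    ∫⁻ y : Fin p → ℝ, ‖∫ s in S, G s * ex (∑ j, y j * Φ s j)‖ₑ ^ 2 ≤
      ENNReal.ofReal c⁻¹ * ∫⁻ s in S, ‖G s‖ₑ ^ 2 := by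
  set Ψ := Function.invFunOn Φ S
  have hΨ : ∀ s ∈ S, Ψ (Φ s) = s := fun s hs => hinj.leftInvOn_invFunOn hs
  set H : (Fin p → ℝ) → ℂ := fun u => |(Φ' (Ψ u)).det|⁻¹ • G (Ψ u) with hH
  have hIm : MeasurableSet (Φ '' S) := measurable_image_of_fderivWithin hS hΦ hinj
  have hpos : ∀ s ∈ S, 0 < |(Φ' s).det| := fun s hs => hc.trans_le (hdet s hs)
  have hHΦ : ∀ s ∈ S, |(Φ' s).det| • H (Φ s) = G s := by
    intro s hs
    simp only [hH]
    rw [hΨ s hs, smul_smul, mul_inv_cancel₀ (hpos s hs).ne', one_smul]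
  have h1 : IntegrableOn H (Φ '' S) := by
    rw [integrableOn_image_iff_integrableOn_abs_det_fderiv_smul volume hS hΦ hinj]
    exact hG.congr_fun (fun s hs => (hHΦ s hs).symm) hS
  have h2 : ∫⁻ u in Φ '' S, ‖H u‖ₑ ^ 2 ≤ ENNReal.ofReal c⁻¹ * ∫⁻ s in S, ‖G s‖ₑ ^ 2 := by
    rw [lintegral_image_eq_lintegral_abs_det_fderiv_mul volume hS hΦ hinj,
      ← lintegral_const_mul' _ _ ENNReal.ofReal_ne_top]
    refine setLIntegral_mono_ae' hS (ae_of_all _ fun s hs => ?_)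
    simp only [hH]
    rw [hΨ s hs, enorm_smul, mul_pow, ← mul_assoc]
    gcongr
    rw [Real.enorm_eq_ofReal (by positivity), ← ENNReal.ofReal_pow (by positivity),
      ← ENNReal.ofReal_mul (by positivity)]
    refine ENNReal.ofReal_le_ofReal ?_
    rw [pow_two, ← mul_assoc, mul_inv_cancel₀ (hpos s hs).ne', one_mul]
    exact inv_anti₀ hc (hdet s hs)
  have h3 : ∫⁻ u, ‖(Φ '' S).indicator H u‖ₑ ^ 2 = ∫⁻ u in Φ '' S, ‖H u‖ₑ ^ 2 := by
    rw [← lintegral_indicator hIm]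
    refine lintegral_congr fun u => ?_
    by_cases hu : u ∈ Φ '' S <;> simp [hu]
  have h4 := lintegral_enorm_integral_mul_ex_sq ((integrable_indicator_iff hIm).2 h1)
    (by rw [h3]; exact h2.trans_lt (ENNReal.mul_lt_top ENNReal.ofReal_lt_top hG2))
  refine le_trans (le_of_eq ?_) (h4.le.trans (h3.le.trans h2))
  refine lintegral_congr fun y => ?_
  congr 2
  have : (fun u => (Φ '' S).indicator H u * ex (∑ j, y j * u j)) =
      (Φ '' S).indicator fun u => H u * ex (∑ j, y j * u j) := by
    ext u
    by_cases hu : u ∈ Φ '' S <;> simp [hu]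
  rw [this, integral_indicator hIm,
    integral_image_eq_integral_abs_det_fderiv_smul volume hS hΦ hinj]
  refine setIntegral_congr_fun hS fun s hs => ?_
  rw [← smul_mul_assoc, hHΦ s hs]

section MomentCurve

open Matrix

/-- The sum of `p` points of the moment curve in `ℝᵖ`. -/
def momentSum (p : ℕ) (s : Fin p → ℝ) : Fin p → ℝ := fun j => ∑ i, s i ^ ((j : ℕ) + 1)

/-- The derivative of `momentSum`. -/
def momentSumDeriv (p : ℕ) (s : Fin p → ℝ) : (Fin p → ℝ) →L[ℝ] Fin p → ℝ :=
  LinearMap.toContinuousLinearMap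
    (Matrix.toLin' (diagonal (fun j : Fin p => ((j : ℕ) + 1 : ℝ)) * (vandermonde s)ᵀ))

lemma hasFDerivAt_momentSum (p : ℕ) (s : Fin p → ℝ) :
    HasFDerivAt (momentSum p) (momentSumDeriv p s) s := by
  rw [hasFDerivAt_pi']
  intro j
  have h : HasFDerivAt (fun s : Fin p → ℝ => ∑ i, s i ^ ((j : ℕ) + 1))
      (∑ i, ((((j : ℕ) + 1 : ℕ) : ℝ) * s i ^ (j : ℕ)) •
        (ContinuousLinearMap.proj i : (Fin p → ℝ) →L[ℝ] ℝ)) s :=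
    HasFDerivAt.fun_sum fun i _ =>
      HasDerivAt.comp_hasFDerivAt (h₂ := fun t : ℝ => t ^ ((j : ℕ) + 1)) s
        (hasDerivAt_pow ((j : ℕ) + 1) (s i)) (hasFDerivAt_apply i s)
  refine h.congr_fderiv ?_
  ext v
  simp [momentSumDeriv, mulVec, dotProduct, vandermonde_apply]

lemma pow_choose_le_abs_det_momentSumDeriv {p : ℕ} {s : Fin p → ℝ} {η : ℝ} (hη : 0 ≤ η)
    (hsep : ∀ i j, i ≠ j → η ≤ |s i - s j|) : η ^ p.choose 2 ≤ |(momentSumDeriv p s).det| := by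
  have h1 : (momentSumDeriv p s).det =
      (∏ j : Fin p, ((j : ℕ) + 1 : ℝ)) * (vandermonde s).det := by
    rw [momentSumDeriv, LinearMap.det_toContinuousLinearMap, LinearMap.det_toLin', det_mul,
      det_diagonal, det_transpose]
  have h2 : (1 : ℝ) ≤ ∏ j : Fin p, ((j : ℕ) + 1 : ℝ) :=
    Finset.one_le_prod fun j => by simp
  rw [h1, abs_mul, abs_of_pos (by linarith)]
  have := pow_choose_le_abs_det_vandermonde hη hsep
  nlinarith [abs_nonneg (vandermonde s).det]

lemma injOn_momentSum {p : ℕ} {J : Fin p → Set ℝ} (hJ : ∀ i, (J i).OrdConnected)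
    (hdisj : ∀ i j, i ≠ j → Disjoint (J i) (J j)) : InjOn (momentSum p) (univ.pi J) := by
  intro s hs s' hs' h
  simp only [mem_univ_pi] at hs hs'
  by_contra hne
  obtain ⟨i₀, hi₀⟩ : ∃ i, s i ≠ s' i := by
    by_contra! hc
    exact hne (funext hc)
  set M : Matrix (Fin p) (Fin p) ℝ := of fun i j =>
    if s i = s' i then ((j : ℕ) + 1 : ℝ) * s i ^ (j : ℕ) else
      (s' i ^ ((j : ℕ) + 1) - s i ^ ((j : ℕ) + 1)) / (s' i - s i) with hM
  have hv : (s' - s) ᵥ* M = 0 := by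
    ext j
    have hj := congrFun h j
    simp only [momentSum] at hj
    have : ∀ i, (s' - s) i * M i j = s' i ^ ((j : ℕ) + 1) - s i ^ ((j : ℕ) + 1) := by
      intro i
      by_cases hi : s i = s' i
      · simp [hi]
      · have : s' i - s i ≠ 0 := sub_ne_zero.2 (Ne.symm hi)
        simp only [hM, of_apply, if_neg hi, Pi.sub_apply]
        field_simp
    simp only [vecMul, dotProduct, this, Finset.sum_sub_distrib, hj, sub_self, Pi.zero_apply]
  have hdet : M.det = 0 := exists_vecMul_eq_zero_iff.1
    ⟨s' - s, fun hz => hi₀ (by have := congrFun hz i₀; simp at this; linarith), hv⟩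
  obtain ⟨q, hq, hMq⟩ := exists_mulVec_eq_zero_iff.2 hdet
  have hzero : ∀ i, ∃ t ∈ J i, ∑ j : Fin p, (((j : ℕ) + 1 : ℝ) * q j) * t ^ (j : ℕ) = 0 := by
    intro i
    have hi := congrFun hMq i
    simp only [mulVec, dotProduct, Pi.zero_apply, hM, of_apply] at hi
    by_cases hss : s i = s' i
    · refine ⟨s i, hs i, ?_⟩
      simp only [if_pos hss] at hi
      rw [← hi]
      exact Finset.sum_congr rfl fun j _ => by ring
    · simp only [if_neg hss] at hi
      have hsum : ∑ j, q j * s' i ^ ((j : ℕ) + 1) = ∑ j, q j * s i ^ ((j : ℕ) + 1) := by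
        have h0 : s' i - s i ≠ 0 := sub_ne_zero.2 (Ne.symm hss)
        rw [← sub_eq_zero, ← Finset.sum_sub_distrib]
        have : ∑ j, (q j * s' i ^ ((j : ℕ) + 1) - q j * s i ^ ((j : ℕ) + 1)) =
            (s' i - s i) * ∑ j : Fin p,
              (s' i ^ ((j : ℕ) + 1) - s i ^ ((j : ℕ) + 1)) / (s' i - s i) * q j := by
          rw [Finset.mul_sum]
          refine Finset.sum_congr rfl fun j _ => ?_
          field_simp
        rw [this, hi, mul_zero]
      have hder : ∀ t : ℝ, HasDerivAt (fun t : ℝ => ∑ j : Fin p, q j * t ^ ((j : ℕ) + 1))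
          (∑ j : Fin p, (((j : ℕ) + 1 : ℝ) * q j) * t ^ (j : ℕ)) t := by
        intro t
        refine HasDerivAt.congr_deriv (HasDerivAt.fun_sum fun j _ =>
          (hasDerivAt_pow ((j : ℕ) + 1) t).const_mul (q j)) ?_
        refine Finset.sum_congr rfl fun j _ => ?_
        push_cast
        ring
      have hcont : Continuous (fun t : ℝ => ∑ j : Fin p, q j * t ^ ((j : ℕ) + 1)) :=
        continuous_finsetSum _ fun j _ => by fun_prop
      rcases lt_or_gt_of_ne hss with hlt | hlt
      · obtain ⟨t, ht, ht0⟩ := exists_hasDerivAt_eq_zero hlt hcont.continuousOn hsum.symm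
          fun t _ => hder t
        exact ⟨t, (hJ i).out (hs i) (hs' i) (Ioo_subset_Icc_self ht), ht0⟩
      · obtain ⟨t, ht, ht0⟩ := exists_hasDerivAt_eq_zero hlt hcont.continuousOn hsum
          fun t _ => hder t
        exact ⟨t, (hJ i).out (hs' i) (hs i) (Ioo_subset_Icc_self ht), ht0⟩
  choose t ht ht0 using hzero
  have htinj : Function.Injective t := by
    intro i j hij
    by_contra hne
    exact disjoint_left.1 (hdisj i j hne) (ht i) (hij ▸ ht j)
  have := eq_zero_of_mulVec_eq_zero (det_vandermonde_ne_zero_iff.2 htinj)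
    (v := fun j => ((j : ℕ) + 1 : ℝ) * q j) (by
      ext i
      simp only [mulVec, dotProduct, vandermonde_apply, Pi.zero_apply]
      rw [← ht0 i]
      exact Finset.sum_congr rfl fun j _ => by ring)
  refine hq (funext fun j => ?_)
  have hj := congrFun this j
  simp only [Pi.zero_apply, mul_eq_zero] at hj
  exact hj.resolve_left (by positivity)

end MomentCurve

lemma enorm_finsetProd {ι : Type*} (s : Finset ι) (f : ι → ℂ) :
    ‖∏ i ∈ s, f i‖ₑ = ∏ i ∈ s, ‖f i‖ₑ := by
  simp only [← ofReal_norm, norm_prod, ENNReal.ofReal_prod_of_nonneg fun _ _ => norm_nonneg _]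

lemma lintegral_prod_enorm_integral_moment_sq_le {p : ℕ} {J : Fin p → Set ℝ}
    (hJ : ∀ i, (J i).OrdConnected) (hvol : ∀ i, volume (J i) < ∞) {η : ℝ} (hη : 0 < η)
    (hsep : ∀ i j, i ≠ j → ∀ a ∈ J i, ∀ b ∈ J j, η ≤ |a - b|) {g : Fin p → ℝ → ℂ}
    (hg : ∀ i, Measurable (g i)) (hg1 : ∀ i t, ‖g i t‖ ≤ 1) :
    ∫⁻ y : Fin p → ℝ, ∏ i, ‖∫ t in J i, g i t * ex (∑ j : Fin p, y j * t ^ ((j : ℕ) + 1))‖ₑ ^ 2 ≤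
      ENNReal.ofReal (η⁻¹ ^ p.choose 2) * ∫⁻ s in univ.pi J, ∏ i, ‖g i (s i)‖ₑ ^ 2 := by
  have hJm : ∀ i, MeasurableSet (J i) := fun i => (hJ i).measurableSet
  have hSm : MeasurableSet (univ.pi J) := MeasurableSet.univ_pi hJm
  have hSv : volume (univ.pi J) < ∞ := by
    rw [volume_pi_pi]
    exact ENNReal.prod_lt_top fun i _ => hvol i
  have hGm : Measurable fun s : Fin p → ℝ => ∏ i, g i (s i) :=
    Finset.measurable_prod _ fun i _ => (hg i).comp (measurable_pi_apply i)
  have hG1 : ∀ s : Fin p → ℝ, ‖∏ i, g i (s i)‖ ≤ 1 := fun s => by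
    rw [norm_prod]
    exact Finset.prod_le_one (fun _ _ => norm_nonneg _) fun i _ => hg1 i _
  have hG2 : ∫⁻ s in univ.pi J, ‖∏ i, g i (s i)‖ₑ ^ 2 < ∞ := by
    refine (lintegral_mono (g := fun _ => 1) fun s => ?_).trans_lt (by simpa using hSv)
    refine pow_le_one' ?_ 2
    rw [← ofReal_norm]
    exact ENNReal.ofReal_le_one.2 (hG1 s)
  have key := lintegral_enorm_setIntegral_mul_ex_comp_sq_le (c := η ^ p.choose 2) hSm
    (fun s _ => (hasFDerivAt_momentSum p s).hasFDerivWithinAt)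
    (injOn_momentSum hJ fun i j hij => disjoint_left.2 fun a ha hb => by
      have := hsep i j hij a ha a hb
      simp at this
      linarith) (by positivity)
    (fun s hs => pow_choose_le_abs_det_momentSumDeriv hη.le fun i j hij =>
      hsep i j hij _ (hs i (mem_univ i)) _ (hs j (mem_univ j)))
    (Measure.integrableOn_of_bounded hSv.ne hGm.aestronglyMeasurable (ae_of_all _ hG1)) hG2
  refine le_trans (le_of_eq ?_) (key.trans (le_of_eq ?_))
  · refine lintegral_congr fun y => ?_
    rw [Finset.prod_pow, ← enorm_finsetProd, ← integral_fintype_prod_eq_prod (𝕜 := ℂ)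
      (μ := fun i => volume.restrict (J i)), ← Measure.restrict_pi_pi, ← volume_pi]
    congr 2
    refine integral_congr_ae (ae_of_all _ fun s => ?_)
    simp only [Finset.prod_mul_distrib, momentSum]
    congr 1
    simp only [ex, ← Complex.exp_sum]
    congr 1
    push_cast
    simp only [Finset.mul_sum]
    rw [Finset.sum_comm]
  · rw [inv_pow]
    simp only [enorm_finsetProd, Finset.prod_pow]

lemma Finset.exists_forall_lt_add_two_le {k : ℕ} {S : Finset ℕ} (hS : 2 * k ≤ S.card) :
    ∃ c : Fin k → ℕ, (∀ i, c i ∈ S) ∧ ∀ i i', i < i' → c i + 2 ≤ c i' := by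
  set e := S.orderEmbOfCardLe hS
  refine ⟨fun i => e ⟨2 * i, by omega⟩, fun i => S.orderEmbOfCardLe_mem hS _, fun i i' h => ?_⟩
  have h1 : e ⟨2 * i, by omega⟩ < e ⟨2 * i + 1, by omega⟩ := e.strictMono (by simp)
  have h2 : e ⟨2 * i + 1, by omega⟩ < e ⟨2 * i', by omega⟩ :=
    e.strictMono (by simp only [Fin.mk_lt_mk]; omega)
  show e _ + 2 ≤ e _
  omega

lemma exists_lt_or_exists_forall_le_of_le_sum {k A : ℕ} (hk : 1 ≤ k) {v : ℕ → ℝ} {b : ℝ}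
    (hb : 0 < b) (h : b / 2 ≤ ∑ c ∈ Finset.range A, v c) :
    (∃ c < A, b / (8 * k) ≤ v c) ∨ ∃ c : Fin k → Fin A,
      (∀ i i', i < i' → (c i : ℕ) + 2 ≤ c i') ∧ ∀ i, b / (4 * A) ≤ v (c i) := by
  set S := (Finset.range A).filter fun c => b / (4 * A) ≤ v c with hS
  have hk' : (1 : ℝ) ≤ k := by exact_mod_cast hk
  by_cases hcard : 2 * k ≤ S.card
  · right
    obtain ⟨c, hcS, hc⟩ := Finset.exists_forall_lt_add_two_le hcard
    have hc' : ∀ i, c i < A ∧ b / (4 * A) ≤ v (c i) := fun i => by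
      simpa [hS] using hcS i
    exact ⟨fun i => ⟨c i, (hc' i).1⟩, hc, fun i => (hc' i).2⟩
  · left
    by_contra! hcon
    have hA : A ≠ 0 := by
      rintro rfl
      simp at h
      linarith
    have hA' : (0 : ℝ) < A := by positivity
    have h1 : ∑ c ∈ S, v c ≤ S.card • (b / (8 * k)) :=
      Finset.sum_le_card_nsmul _ _ _ fun c hc => by
        have := (Finset.mem_filter.1 hc).1
        exact (hcon c (Finset.mem_range.1 this)).le
    have h2 : ∑ c ∈ (Finset.range A).filter (fun c => ¬ b / (4 * A) ≤ v c), v c ≤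
        ∑ c ∈ (Finset.range A).filter (fun c => ¬ b / (4 * A) ≤ v c), b / (4 * A) :=
      Finset.sum_le_sum fun c hc => (not_le.1 (Finset.mem_filter.1 hc).2).le
    have h3 : ∑ c ∈ (Finset.range A).filter (fun c => ¬ b / (4 * A) ≤ v c), b / (4 * A) ≤
        b / 4 := by
      rw [Finset.sum_const, nsmul_eq_mul]
      have : (((Finset.range A).filter (fun c => ¬ b / (4 * A) ≤ v c)).card : ℝ) ≤ A := by
        exact_mod_cast (Finset.card_filter_le _ _).trans (Finset.card_range A).le
      calc _ ≤ (A : ℝ) * (b / (4 * A)) := by gcongr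
        _ = b / 4 := by field_simp
    have h4 : S.card • (b / (8 * k)) < b / 4 := by
      rw [nsmul_eq_mul]
      have : (S.card : ℝ) < 2 * k := by exact_mod_cast not_le.1 hcard
      calc _ < (2 * k : ℝ) * (b / (8 * k)) := by gcongr
        _ = b / 4 := by field_simp; norm_num
    have h5 := Finset.sum_filter_add_sum_filter_not (Finset.range A)
      (fun c => b / (4 * A) ≤ v c) v
    linarith

lemma exists_scale_forall_le_of_le_sum {k A : ℕ} (hk : 1 ≤ k) {u : ℕ → ℕ → ℝ}
    {b : ℝ} (hb : 0 < b) (h0 : b ≤ u 0 0)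
    (hrec : ∀ m j, u m j ≤ ∑ c ∈ Finset.range A, u (m + 1) (A * j + c) + b / (8 * k) ^ m / 2)
    {M : ℕ} (hM : ∀ j, u M j ≤ 0) :
    ∃ m, ∃ j < A ^ m, ∃ c : Fin k → Fin A, (∀ i i', i < i' → (c i : ℕ) + 2 ≤ c i') ∧
      ∀ i, b / (8 * k) ^ m / (4 * A) ≤ u (m + 1) (A * j + c i) := by
  by_contra! hcon
  have hk' : (1 : ℝ) ≤ k := by exact_mod_cast hk
  have key : ∀ m, ∃ j < A ^ m, b / (8 * k) ^ m ≤ u m j := by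
    intro m
    induction m with
    | zero => exact ⟨0, by simp, by simpa⟩
    | succ m ih =>
      obtain ⟨j, hj, hbj⟩ := ih
      have := hrec m j
      rcases exists_lt_or_exists_forall_le_of_le_sum hk (A := A) (b := b / (8 * k) ^ m)
        (v := fun c => u (m + 1) (A * j + c)) (by positivity) (by linarith) with
        ⟨c, hc, hbc⟩ | ⟨c, hc, hbc⟩
      · refine ⟨A * j + c, ?_, ?_⟩
        · calc A * j + c < A * j + A := by omega
            _ = A * (j + 1) := by ring
            _ ≤ A * A ^ m := Nat.mul_le_mul_left _ hj
            _ = A ^ (m + 1) := by ring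
        · rwa [pow_succ, ← div_div]
      · obtain ⟨i, hi⟩ := hcon m j hj c hc
        exact absurd (hbc i) (not_le.2 hi)
  obtain ⟨j, -, hj⟩ := key M
  have : 0 < b / (8 * k : ℝ) ^ M := by positivity
  linarith [hM j]

lemma norm_cut_sub_cut_le {σ τ : ℝ} (h : σ ≤ τ) (hτ : 0 ≤ τ) (z : ℂ) :
    ‖cut σ z - cut τ z‖ ≤ τ := by
  by_cases h1 : σ ≤ ‖z‖
  · rw [cut_eq_self h1]
    exact norm_sub_cut_le hτ z
  · rw [cut_eq_zero (not_le.1 h1), cut_eq_zero ((not_le.1 h1).trans_le h)]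
    simpa

/-- The integral of `cut τ (f s) * w s` over the `j`-th of the intervals of length `A⁻ᵐ`. -/
def scaleInt (A m j : ℕ) (τ : ℝ) (f w : ℝ → ℂ) : ℂ :=
  ∫ s in (j / A ^ m : ℝ)..((j + 1) / A ^ m), cut τ (f s) * w s

section ScaleInt

variable {f w : ℝ → ℂ}

lemma intervalIntegrable_cut_mul (hf : Measurable f) (hf1 : ∀ s, ‖f s‖ ≤ 1) (hw : Measurable w)
    (hw1 : ∀ s, ‖w s‖ ≤ 1) (τ a b : ℝ) :
    IntervalIntegrable (fun s => cut τ (f s) * w s) volume a b := by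
  refine (intervalIntegrable_const (c := (1 : ℝ))).mono_fun
    (((measurable_cut τ).comp hf).mul hw).aestronglyMeasurable (ae_of_all _ fun s => ?_)
  simp only [norm_mul, norm_one]
  exact mul_le_one₀ ((norm_cut_le _ _).trans (hf1 s)) (norm_nonneg _) (hw1 s)

lemma norm_scaleInt_le_sum (hf : Measurable f) (hf1 : ∀ s, ‖f s‖ ≤ 1) (hw : Measurable w)
    (hw1 : ∀ s, ‖w s‖ ≤ 1) {A : ℕ} (hA : 0 < A) (m j : ℕ) {σ τ : ℝ} (h : σ ≤ τ) (hτ : 0 ≤ τ) :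
    ‖scaleInt A m j σ f w‖ ≤
      ∑ c ∈ Finset.range A, ‖scaleInt A (m + 1) (A * j + c) τ f w‖ + τ / A ^ m := by
  have hA' : (0 : ℝ) < A := by exact_mod_cast hA
  have hii := intervalIntegrable_cut_mul hf hf1 hw hw1
  have hsplit : scaleInt A m j σ f w =
      ∑ c ∈ Finset.range A, scaleInt A (m + 1) (A * j + c) σ f w := by
    have := intervalIntegral.sum_integral_adjacent_intervals (μ := volume) (n := A)
      (a := fun c : ℕ => ((A * j + c : ℕ) : ℝ) / A ^ (m + 1)) fun c _ => hii σ _ _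
    simp only [scaleInt]
    convert this.symm using 1
    · congr 1
      · push_cast
        field_simp
        ring
      · push_cast
        field_simp
        ring
    · refine Finset.sum_congr rfl fun c _ => ?_
      push_cast
      simp only [add_assoc]
  have hdiff : ∀ l : ℕ, ‖scaleInt A (m + 1) l σ f w‖ ≤
      ‖scaleInt A (m + 1) l τ f w‖ + τ / A ^ (m + 1) := by
    intro l
    have : scaleInt A (m + 1) l σ f w = scaleInt A (m + 1) l τ f w +
        ∫ s in (l / A ^ (m + 1) : ℝ)..((l + 1) / A ^ (m + 1)),
          (cut σ (f s) * w s - cut τ (f s) * w s) := by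
      rw [intervalIntegral.integral_sub (hii _ _ _) (hii _ _ _)]
      simp [scaleInt]
    rw [this]
    refine (norm_add_le _ _).trans (by
      gcongr
      refine (intervalIntegral.norm_integral_le_of_norm_le_const (C := τ) fun s _ => ?_).trans
        (le_of_eq ?_)
      · rw [← sub_mul, norm_mul]
        exact (mul_le_of_le_one_right (norm_nonneg _) (hw1 s)).trans (norm_cut_sub_cut_le h hτ _)
      · rw [← sub_div, add_sub_cancel_left, abs_of_pos (by positivity)]
        ring)
  rw [hsplit]
  calc _ ≤ ∑ c ∈ Finset.range A, ‖scaleInt A (m + 1) (A * j + c) σ f w‖ := norm_sum_le _ _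
    _ ≤ ∑ c ∈ Finset.range A, (‖scaleInt A (m + 1) (A * j + c) τ f w‖ + τ / A ^ (m + 1)) :=
      Finset.sum_le_sum fun c _ => hdiff _
    _ = _ := by
      rw [Finset.sum_add_distrib, Finset.sum_const, Finset.card_range, nsmul_eq_mul]
      congr 1
      field_simp
      ring

lemma scaleInt_eq_zero (hf1 : ∀ s, ‖f s‖ ≤ 1) {τ : ℝ} (hτ : 1 < τ) (A m j : ℕ) :
    scaleInt A m j τ f w = 0 := by
  simp [scaleInt, cut_eq_zero ((hf1 _).trans_lt hτ)]

lemma exists_scale_forall_le_norm_scaleInt (hf : Measurable f) (hf1 : ∀ s, ‖f s‖ ≤ 1)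
    (hw : Measurable w) (hw1 : ∀ s, ‖w s‖ ≤ 1) {k κ : ℕ} (hk : 1 ≤ k) (hκ : 2 ≤ κ) {δ : ℝ}
    (hδ : 0 < δ) (h : δ ≤ ‖∫ s in (0 : ℝ)..1, f s * w s‖) :
    ∃ m, ∃ j < (8 * k * κ) ^ m, ∃ c : Fin k → Fin (8 * k * κ),
      (∀ i i', i < i' → (c i : ℕ) + 2 ≤ c i') ∧
      ∀ i, δ / (8 * (8 * k * κ)) / (8 * k) ^ m ≤
        ‖scaleInt (8 * k * κ) (m + 1) (8 * k * κ * j + c i) (δ / 4 * κ ^ m) f w‖ := by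
  have hk' : (1 : ℝ) ≤ k := by exact_mod_cast hk
  have hκ' : (2 : ℝ) ≤ κ := by exact_mod_cast hκ
  have h0 : δ / 2 ≤ ‖scaleInt (8 * k * κ) 0 0 (δ / 4 * κ ^ 0 / κ) f w‖ := by
    have h1 : ∫ s in (0 : ℝ)..1, f s * w s = scaleInt (8 * k * κ) 0 0 0 f w := by
      simp [scaleInt, cut_eq_self (norm_nonneg _)]
    have h2 : scaleInt (8 * k * κ) 0 0 0 f w = scaleInt (8 * k * κ) 0 0 (δ / 4 * κ ^ 0 / κ) f w +
        ∫ s in (0 : ℝ)..1, (cut 0 (f s) * w s - cut (δ / 4 * κ ^ 0 / κ) (f s) * w s) := by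
      rw [intervalIntegral.integral_sub (intervalIntegrable_cut_mul hf hf1 hw hw1 _ _ _)
        (intervalIntegrable_cut_mul hf hf1 hw hw1 _ _ _)]
      simp [scaleInt]
    have h3 : ‖∫ s in (0 : ℝ)..1, (cut 0 (f s) * w s - cut (δ / 4 * κ ^ 0 / κ) (f s) * w s)‖ ≤
        δ / 4 * κ ^ 0 / κ := by
      refine (intervalIntegral.norm_integral_le_of_norm_le_const (C := δ / 4 * κ ^ 0 / κ)
        fun s _ => ?_).trans (by simp)
      rw [← sub_mul, norm_mul]
      exact (mul_le_of_le_one_right (norm_nonneg _) (hw1 s)).trans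
        (norm_cut_sub_cut_le (by positivity) (by positivity) _)
    have h4 : δ / 4 * κ ^ 0 / κ ≤ δ / 2 := by
      rw [pow_zero, mul_one, div_le_iff₀ (by positivity)]
      nlinarith
    rw [h1, h2] at h
    linarith [norm_add_le (scaleInt (8 * k * κ) 0 0 (δ / 4 * κ ^ 0 / κ) f w)
      (∫ s in (0 : ℝ)..1, (cut 0 (f s) * w s - cut (δ / 4 * κ ^ 0 / κ) (f s) * w s))]
  have hrec : ∀ m j, ‖scaleInt (8 * k * κ) m j (δ / 4 * κ ^ m / κ) f w‖ ≤
      ∑ c ∈ Finset.range (8 * k * κ), ‖scaleInt (8 * k * κ) (m + 1) (8 * k * κ * j + c)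
        (δ / 4 * κ ^ (m + 1) / κ) f w‖ + δ / 2 / (8 * k) ^ m / 2 := by
    intro m j
    refine (norm_scaleInt_le_sum hf hf1 hw hw1 (by positivity) m j
      (τ := δ / 4 * κ ^ (m + 1) / κ) ?_ (by positivity)).trans (le_of_eq ?_)
    · gcongr
      · linarith
      · omega
    · congr 1
      push_cast
      rw [mul_pow (8 * k : ℝ)]
      field_simp
      ring
  obtain ⟨M, hM⟩ := pow_unbounded_of_one_lt (4 * κ / δ) (show (1 : ℝ) < κ by linarith)
  have hM' : 1 < δ / 4 * κ ^ M / κ := by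
    rw [div_lt_iff₀ hδ] at hM
    rw [lt_div_iff₀ (by positivity)]
    linarith
  obtain ⟨m, j, hj, c, hc, hbc⟩ := exists_scale_forall_le_of_le_sum
    (u := fun m j => ‖scaleInt (8 * k * κ) m j (δ / 4 * κ ^ m / κ) f w‖) hk (half_pos hδ) h0 hrec
    (M := M) fun j => by simp [scaleInt_eq_zero hf1 hM']
  refine ⟨m, j, hj, c, hc, fun i => ?_⟩
  have hτ : δ / 4 * κ ^ (m + 1) / κ = δ / 4 * κ ^ m := by field_simp; ring
  have := hbc i
  simp only [hτ] at this
  refine le_trans (le_of_eq ?_) this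
  push_cast
  field_simp
  norm_num

end ScaleInt

lemma meas_forall_le_norm_le {α ι : Type*} [MeasurableSpace α] [Fintype ι] {μ : Measure α}
    {T : ι → α → ℂ} (hT : ∀ i, Measurable (T i)) {θ : ℝ} (hθ : 0 < θ) :
    μ {a | ∀ i, θ ≤ ‖T i a‖} ≤
      ENNReal.ofReal (θ⁻¹ ^ (2 * Fintype.card ι)) * ∫⁻ a, ∏ i, ‖T i a‖ₑ ^ 2 ∂μ := by
  have hsub : {a | ∀ i, θ ≤ ‖T i a‖} ⊆
      {a | ENNReal.ofReal (θ ^ (2 * Fintype.card ι)) ≤ ∏ i, ‖T i a‖ₑ ^ 2} := by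
    intro a ha
    have : ENNReal.ofReal (θ ^ (2 * Fintype.card ι)) = ∏ _i : ι, ENNReal.ofReal θ ^ 2 := by
      rw [Finset.prod_const, Finset.card_univ, ← pow_mul, ENNReal.ofReal_pow hθ.le]
    rw [Set.mem_ofPred_eq, this]
    refine Finset.prod_le_prod' fun i _ => ?_
    rw [← ofReal_norm]
    gcongr
    exact ha i
  have h0 : ENNReal.ofReal (θ ^ (2 * Fintype.card ι)) ≠ 0 := by
    rw [Ne, ENNReal.ofReal_eq_zero, not_le]
    positivity
  refine (measure_mono hsub).trans ((meas_ge_le_lintegral_div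
    (Finset.measurable_prod _ fun i _ => (hT i).enorm.pow_const 2).aemeasurable h0
    ENNReal.ofReal_ne_top).trans (le_of_eq ?_))
  rw [ENNReal.div_eq_inv_mul, ← ENNReal.ofReal_inv_of_pos (by positivity), inv_pow]

/-- The character of the point of the moment curve with parameter `s`. -/
def momentChar {p : ℕ} (y : Fin p → ℝ) (s : ℝ) : ℂ := ex (∑ j : Fin p, y j * s ^ ((j : ℕ) + 1))

lemma continuous_momentChar (p : ℕ) :
    Continuous fun z : (Fin p → ℝ) × ℝ => momentChar z.1 z.2 :=
  continuous_ex.comp (continuous_finsetSum _ fun j _ => by fun_prop)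

lemma measurable_scaleInt {n p : ℕ} (A m l : ℕ) (τ : ℝ) :
    Measurable fun z : (WI n → ℝ) × (Fin p → ℝ) =>
      scaleInt A m l τ (innerInt n z.1) (momentChar z.2) := by
  have hm : Measurable fun q : ((WI n → ℝ) × (Fin p → ℝ)) × ℝ =>
      cut τ (innerInt n q.1.1 q.2) * momentChar q.1.2 q.2 := by
    refine ((measurable_cut τ).comp ?_).mul ?_
    · exact ((continuous_innerInt n).comp (by fun_prop :
        Continuous fun q : ((WI n → ℝ) × (Fin p → ℝ)) × ℝ => (q.1.1, q.2))).measurable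
    · exact ((continuous_momentChar p).comp (by fun_prop :
        Continuous fun q : ((WI n → ℝ) × (Fin p → ℝ)) × ℝ => (q.1.2, q.2))).measurable
  simp only [scaleInt, intervalIntegral]
  exact (hm.stronglyMeasurable.integral_prod_right').measurable.sub
    (hm.stronglyMeasurable.integral_prod_right').measurable

lemma le_abs_sub_of_mem_Ioc {A m l l' : ℕ} (hA : 0 < A) (h : l + 2 ≤ l') {a b : ℝ}
    (ha : a ∈ Ioc (l / A ^ m : ℝ) ((l + 1) / A ^ m))
    (hb : b ∈ Ioc (l' / A ^ m : ℝ) ((l' + 1) / A ^ m)) : ((A : ℝ) ^ m)⁻¹ ≤ b - a := by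
  have h' : (l : ℝ) + 2 ≤ l' := by exact_mod_cast h
  have hA' : (0 : ℝ) < (A : ℝ) ^ m := by positivity
  have : ((l : ℝ) + 2) / A ^ m ≤ l' / A ^ m := by gcongr
  have e : ((l : ℝ) + 2) / A ^ m = (l + 1) / A ^ m + ((A : ℝ) ^ m)⁻¹ := by
    field_simp
    ring
  linarith [ha.2, hb.1]

lemma exists_volume_forall_le_norm_scaleInt_le {n : ℕ} (hn : 1 ≤ n) :
    ∃ C D : ℝ, 0 < C ∧ 2 ≤ D ∧ ∀ (A m : ℕ) (l : Fin (n + 1) → ℕ) (θ τ : ℝ), 0 < A →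
      (∀ i i', i < i' → l i + 2 ≤ l i') → 0 < θ → 0 < τ → τ ≤ 1 →
      volume {z : (WI n → ℝ) × (Fin (n + 1) → ℝ) |
        ∀ i, θ ≤ ‖scaleInt A m (l i) τ (innerInt n z.1) (momentChar z.2)‖} ≤
      ENNReal.ofReal (θ⁻¹ ^ (2 * (n + 1)) * (((A : ℝ) ^ m) ^ (n + 1).choose 2 *
        (C * log (D / τ) * ((A : ℝ) ^ m) ^ (n + 2).choose 3 *
          (τ⁻¹ ^ ((n + 3).choose 3 + 2) * τ ^ (2 * (n + 1))) * ((A : ℝ) ^ m)⁻¹ ^ (n + 1)))) := by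
  obtain ⟨C, D, hC, hD, h⟩ := exists_lintegral_prod_cut_innerInt_le hn
  refine ⟨C, D, hC, hD, fun A m l θ τ hA hl hθ hτ hτ1 => ?_⟩
  set J : Fin (n + 1) → Set ℝ := fun i => Ioc (l i / A ^ m : ℝ) ((l i + 1) / A ^ m) with hJ
  have hApos : (0 : ℝ) < (A : ℝ) ^ m := by positivity
  have hJm : ∀ i, MeasurableSet (J i) := fun i => measurableSet_Ioc
  have hle : ∀ i, (l i / A ^ m : ℝ) ≤ (l i + 1) / A ^ m := fun i => by gcongr; linarith
  have hsep : ∀ i j, i ≠ j → ∀ a ∈ J i, ∀ b ∈ J j, ((A : ℝ) ^ m)⁻¹ ≤ |a - b| := by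
    intro i j hij a ha b hb
    rcases lt_or_gt_of_ne hij with hlt | hlt
    · rw [abs_sub_comm]
      exact (le_abs_sub_of_mem_Ioc hA (hl i j hlt) ha hb).trans (le_abs_self _)
    · exact (le_abs_sub_of_mem_Ioc hA (hl j i hlt) hb ha).trans (le_abs_self _)
  have hT := fun i => measurable_scaleInt (n := n) (p := n + 1) A m (l i) τ
  refine (meas_forall_le_norm_le hT hθ).trans ?_
  rw [ENNReal.ofReal_mul (by positivity), Fintype.card_fin]
  gcongr
  have hcutm : Measurable fun q : (WI n → ℝ) × (Fin (n + 1) → ℝ) =>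
      ∏ i, ‖cut τ (innerInt n q.1 (q.2 i))‖ₑ ^ 2 :=
    Finset.measurable_prod _ fun i _ => ((((measurable_cut τ).comp
      ((continuous_innerInt n).comp (by fun_prop : Continuous fun q : (WI n → ℝ) ×
        (Fin (n + 1) → ℝ) => (q.1, q.2 i))).measurable)).enorm).pow_const 2
  have hP : ∀ x : WI n → ℝ, ∫⁻ y : Fin (n + 1) → ℝ,
      ∏ i, ‖scaleInt A m (l i) τ (innerInt n x) (momentChar y)‖ₑ ^ 2 ≤
      ENNReal.ofReal (((A : ℝ) ^ m) ^ (n + 1).choose 2) *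
        ∫⁻ s in univ.pi J, ∏ i, ‖cut τ (innerInt n x (s i))‖ₑ ^ 2 := by
    intro x
    have := lintegral_prod_enorm_integral_moment_sq_le (J := J) (fun i => ordConnected_Ioc)
      (fun i => measure_Ioc_lt_top) (inv_pos.2 hApos) hsep
      (g := fun _ s => cut τ (innerInt n x s))
      (fun i => (measurable_cut τ).comp ((continuous_innerInt n).comp
        (by fun_prop : Continuous fun s : ℝ => (x, s))).measurable)
      (fun i t => (norm_cut_le _ _).trans (norm_innerInt_le_one _ _ _))
    rw [inv_inv] at this
    simpa only [scaleInt, intervalIntegral.integral_of_le (hle _), momentChar] using this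
  have hvolJ : volume (univ.pi J) = ENNReal.ofReal (((A : ℝ) ^ m)⁻¹ ^ (n + 1)) := by
    rw [volume_pi_pi]
    have : ∀ i, volume (J i) = ENNReal.ofReal ((A : ℝ) ^ m)⁻¹ := by
      intro i
      rw [hJ, Real.volume_Ioc, ← sub_div, add_sub_cancel_left, one_div]
    simp only [this, Finset.prod_const, Finset.card_univ, Fintype.card_fin]
    rw [ENNReal.ofReal_pow (by positivity)]
  calc _ = ∫⁻ x, ∫⁻ y, ∏ i, ‖scaleInt A m (l i) τ (innerInt n x) (momentChar y)‖ₑ ^ 2 := by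
        rw [Measure.volume_eq_prod, lintegral_prod]
        exact (Finset.measurable_prod _ fun i _ => (hT i).enorm.pow_const 2).aemeasurable
    _ ≤ ∫⁻ x, ENNReal.ofReal (((A : ℝ) ^ m) ^ (n + 1).choose 2) *
        ∫⁻ s in univ.pi J, ∏ i, ‖cut τ (innerInt n x (s i))‖ₑ ^ 2 := lintegral_mono hP
    _ = ENNReal.ofReal (((A : ℝ) ^ m) ^ (n + 1).choose 2) * ∫⁻ s in univ.pi J,
        ∫⁻ x, ∏ i, ‖cut τ (innerInt n x (s i))‖ₑ ^ 2 := by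
        rw [lintegral_const_mul' _ _ ENNReal.ofReal_ne_top,
          lintegral_lintegral_swap hcutm.aemeasurable]
    _ ≤ ENNReal.ofReal (((A : ℝ) ^ m) ^ (n + 1).choose 2) * ∫⁻ s in univ.pi J,
        ENNReal.ofReal (C * log (D / τ) * ((A : ℝ) ^ m) ^ (n + 2).choose 3 *
          (τ⁻¹ ^ ((n + 3).choose 3 + 2) * τ ^ (2 * (n + 1)))) := by
        refine mul_le_mul_right ?_ _
        refine setLIntegral_mono' (MeasurableSet.univ_pi hJm) fun s hs => ?_
        have := h s ((A : ℝ) ^ m)⁻¹ τ (inv_pos.2 hApos) (fun i j hij =>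
          hsep i j hij _ (hs i (mem_univ i)) _ (hs j (mem_univ j))) hτ hτ1
        rwa [inv_inv] at this
    _ = _ := by
        have hlog : 0 ≤ log (D / τ) := log_nonneg (by
          rw [le_div_iff₀ hτ]
          linarith)
        rw [setLIntegral_const, hvolJ, ← ENNReal.ofReal_mul (by positivity),
          ← ENNReal.ofReal_mul (by positivity)]

lemma log_div_le_mul_log_one_add_pow {D : ℝ} (hD : 1 ≤ D) {n : ℕ} (hn : 1 ≤ n) {δ : ℝ}
    (hδ : 0 < δ) (hδ1 : δ ≤ 1) :
    log (D / δ) ≤ (log D / log 2 + 1) * (log 2)⁻¹ ^ (n - 1) * log (1 + 1 / δ) ^ n := by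
  have h2 : 0 < log 2 := log_pos one_lt_two
  have hL : log 2 ≤ log (1 + 1 / δ) := log_le_log two_pos (by
    have := (one_le_div hδ).2 hδ1
    linarith)
  have hD' := log_nonneg hD
  have h1 : log (D / δ) ≤ (log D / log 2 + 1) * log (1 + 1 / δ) := by
    have e : log (D / δ) = log D / log 2 * log 2 + log (1 / δ) := by
      rw [div_mul_cancel₀ _ h2.ne', div_eq_mul_one_div, log_mul (by positivity) (by positivity)]
    have h3 : log (1 / δ) ≤ log (1 + 1 / δ) := log_le_log (by positivity) (by linarith)
    rw [e, add_mul, one_mul]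
    gcongr
  have h4 : log (1 + 1 / δ) ≤ (log 2)⁻¹ ^ (n - 1) * log (1 + 1 / δ) ^ n := by
    obtain ⟨r, rfl⟩ : ∃ r, n = r + 1 := ⟨n - 1, by omega⟩
    rw [Nat.add_sub_cancel, pow_succ, ← mul_assoc, ← mul_pow]
    refine le_mul_of_one_le_left (h2.le.trans hL) (one_le_pow₀ ?_)
    rw [← div_eq_inv_mul]
    exact (one_le_div h2).2 hL
  rw [mul_assoc]
  exact h1.trans (by gcongr)

lemma scale_exponent_identity {a b k : ℕ} {δ A Λ L : ℝ} (hδ : 0 < δ) (hA : 0 < A) (hΛ : 0 < Λ) :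
    (δ / (8 * A) / Λ)⁻¹ ^ (2 * k) * ((A * Λ ^ (a + b + k + 2 + 1)) ^ a *
      (L * (A * Λ ^ (a + b + k + 2 + 1)) ^ b * ((δ / 4 * Λ ^ (a + b + k + 2))⁻¹ ^ (a + b + k + 2) *
        (δ / 4 * Λ ^ (a + b + k + 2)) ^ (2 * k)) * (A * Λ ^ (a + b + k + 2 + 1))⁻¹ ^ k)) =
    2 ^ (2 * k) * A ^ (k + a + b) * 4 ^ (a + b + k + 2) * L * δ⁻¹ ^ (a + b + k + 2) *
      (Λ ^ (a + b + k + 2 + 1) * Λ)⁻¹ := by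
  set q := a + b + k + 2 with hq
  set Z := Λ ^ q with hZ
  have hZ0 : 0 < Z := by positivity
  have e1 : (δ / (8 * A) / Λ)⁻¹ ^ (2 * k) * (δ / 4 * Z) ^ (2 * k) =
      2 ^ (2 * k) * (A * (Z * Λ)) ^ (2 * k) := by
    rw [← mul_pow, ← mul_pow]
    congr 1
    field_simp
    norm_num
  have e2 : (A * (Z * Λ)) ^ (2 * k) * (A * (Z * Λ)) ^ a * (A * (Z * Λ)) ^ b *
      (A * (Z * Λ))⁻¹ ^ k = A ^ (k + a + b) * (Z * Λ) ^ (k + a + b) := by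
    rw [← mul_pow, inv_pow, mul_inv_eq_iff_eq_mul₀ (by positivity)]
    ring
  have e3 : (Z * Λ) ^ (k + a + b) * (δ / 4 * Z)⁻¹ ^ q = 4 ^ q * δ⁻¹ ^ q * ((Z * Λ) * Λ)⁻¹ := by
    have h1 : (Z * Λ) ^ q = (Z * Λ) ^ (k + a + b) * (Z * Λ) ^ 2 := by
      rw [hq]
      ring
    have h2 : Z ^ q * Z = (Z * Λ) ^ (k + a + b) * (Z * Λ) ^ 2 := by
      rw [← h1, mul_pow, ← hZ]
    have h3 : (Z * Λ) ^ (k + a + b) * (Z * Λ * Λ) = Z ^ q :=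
      mul_right_cancel₀ hZ0.ne' (by rw [h2]; ring)
    have h4 : (δ / 4 * Z)⁻¹ = 4 * δ⁻¹ * Z⁻¹ := by
      field_simp
    rw [h4, mul_pow, mul_pow, inv_pow Z, ← h3, mul_inv ((Z * Λ) ^ (k + a + b))]
    have h5 : (Z * Λ) ^ (k + a + b) * ((Z * Λ) ^ (k + a + b))⁻¹ = 1 :=
      mul_inv_cancel₀ (by positivity)
    linear_combination (4 ^ q * δ⁻¹ ^ q * (Z * Λ * Λ)⁻¹) * h5
  rw [pow_succ, ← hZ]
  calc _ = (δ / (8 * A) / Λ)⁻¹ ^ (2 * k) * (δ / 4 * Z) ^ (2 * k) * L *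
      ((A * (Z * Λ)) ^ a * (A * (Z * Λ)) ^ b * (A * (Z * Λ))⁻¹ ^ k) * (δ / 4 * Z)⁻¹ ^ q := by ring
    _ = 2 ^ (2 * k) * L * ((A * (Z * Λ)) ^ (2 * k) * (A * (Z * Λ)) ^ a * (A * (Z * Λ)) ^ b *
      (A * (Z * Λ))⁻¹ ^ k) * (δ / 4 * Z)⁻¹ ^ q := by rw [e1]; ring
    _ = 2 ^ (2 * k) * L * A ^ (k + a + b) *
      ((Z * Λ) ^ (k + a + b) * (δ / 4 * Z)⁻¹ ^ q) := by rw [e2]; ring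
    _ = _ := by rw [e3]; ring

lemma exists_volume_scale_le {n : ℕ} (hn : 1 ≤ n) :
    ∃ C D : ℝ, 0 < C ∧ 2 ≤ D ∧ ∀ (κ : ℕ), κ = (8 * (n + 1)) ^ ((n + 3).choose 3 + 2) →
      ∀ (m : ℕ) (l : Fin (n + 1) → ℕ) (δ : ℝ), 0 < δ → (∀ i i', i < i' → l i + 2 ≤ l i') →
      volume {z : (WI n → ℝ) × (Fin (n + 1) → ℝ) |
        ∀ i, δ / (8 * (8 * (n + 1) * κ)) / (8 * (n + 1)) ^ m ≤
          ‖scaleInt (8 * (n + 1) * κ) (m + 1) (l i) (δ / 4 * κ ^ m) (innerInt n z.1)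
            (momentChar z.2)‖} ≤
      ENNReal.ofReal (C * log (D / δ) * δ⁻¹ ^ ((n + 3).choose 3 + 2) *
        (((8 * (n + 1) * κ : ℝ) ^ m)⁻¹ * (8 * (n + 1) : ℝ)⁻¹ ^ m)) := by
  obtain ⟨C, D, hC, hD, h⟩ := exists_volume_forall_le_norm_scaleInt_le hn
  have hch : (n + 3).choose 3 + 2 =
      (n + 1).choose 2 + (n + 2).choose 3 + (n + 1) + 2 := by
    have h1 : (n + 3).choose 3 = (n + 2).choose 2 + (n + 2).choose 3 := rfl
    have h2 : (n + 2).choose 2 = (n + 1).choose 1 + (n + 1).choose 2 := rfl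
    rw [Nat.choose_one_right] at h2
    omega
  refine ⟨2 ^ (2 * (n + 1)) * (8 * (n + 1) * (8 * (n + 1)) ^ ((n + 3).choose 3 + 2)) ^
    (n + 1 + (n + 1).choose 2 + (n + 2).choose 3) * 4 ^ ((n + 3).choose 3 + 2) * C, 4 * D,
    by positivity, by linarith, fun κ hκ m l δ hδ hl => ?_⟩
  have hκ0 : 0 < κ := by rw [hκ]; positivity
  have hκ1 : (1 : ℝ) ≤ κ := by exact_mod_cast hκ0
  rcases lt_or_ge 1 (δ / 4 * κ ^ m) with hτ | hτ
  · refine le_of_eq_of_le (measure_mono_null (t := ∅) (fun z hz => ?_) measure_empty) zero_le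
    have := hz 0
    rw [scaleInt_eq_zero (norm_innerInt_le_one n z.1) hτ, norm_zero] at this
    have : 0 < δ / (8 * (8 * (n + 1) * κ)) / (8 * (n + 1) : ℝ) ^ m := by positivity
    linarith
  refine (h (8 * (n + 1) * κ) (m + 1) l _ _ (by positivity) hl (by positivity) (by positivity)
    hτ).trans (ENNReal.ofReal_le_ofReal ?_)
  have hlog : log (D / (δ / 4 * κ ^ m)) ≤ log (4 * D / δ) := by
    refine log_le_log (by positivity) ?_
    rw [div_le_div_iff₀ (by positivity) hδ]
    have : (1 : ℝ) ≤ κ ^ m := one_le_pow₀ hκ1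
    have hDδ : 0 < D * δ := by positivity
    nlinarith
  have hlog0 : 0 ≤ log (4 * D / δ) := (log_nonneg (by
    rw [le_div_iff₀ (by positivity)]
    linarith)).trans hlog
  have key := scale_exponent_identity (a := (n + 1).choose 2) (b := (n + 2).choose 3)
    (k := n + 1) (A := 8 * (n + 1) * κ) (Λ := (8 * (n + 1)) ^ m) (L := C * log (4 * D / δ)) hδ
    (by positivity) (by positivity)
  rw [← hch] at key
  have hκm : (κ : ℝ) ^ m = ((8 * (n + 1)) ^ m) ^ ((n + 3).choose 3 + 2) := by
    rw [hκ]
    push_cast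
    rw [← pow_mul, ← pow_mul, mul_comm m]
  have hAm : (8 * (n + 1) * κ : ℝ) ^ m = ((8 * (n + 1)) ^ m) ^ ((n + 3).choose 3 + 2 + 1) := by
    rw [mul_pow, hκm, pow_succ _ ((n + 3).choose 3 + 2), mul_comm]
  push_cast
  rw [pow_succ' _ m, hAm]
  calc _ ≤ (δ / (8 * (8 * (n + 1) * κ)) / (8 * (n + 1)) ^ m)⁻¹ ^ (2 * (n + 1)) *
      ((8 * (n + 1) * κ * ((8 * (n + 1)) ^ m) ^ ((n + 3).choose 3 + 2 + 1)) ^ (n + 1).choose 2 *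
        (C * log (4 * D / δ) * (8 * (n + 1) * κ *
          ((8 * (n + 1)) ^ m) ^ ((n + 3).choose 3 + 2 + 1)) ^ (n + 2).choose 3 *
          ((δ / 4 * κ ^ m)⁻¹ ^ ((n + 3).choose 3 + 2) * (δ / 4 * κ ^ m) ^ (2 * (n + 1))) *
          (8 * (n + 1) * κ * ((8 * (n + 1) : ℝ) ^ m) ^ ((n + 3).choose 3 + 2 + 1))⁻¹ ^
            (n + 1))) := by
        gcongr
    _ = _ := by
      rw [hκm, key, hκ, mul_inv, inv_pow (8 * (n + 1) : ℝ)]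
      push_cast
      ring

lemma exists_volume_le_norm_integral_innerInt_le {n : ℕ} (hn : 1 ≤ n) :
    ∃ C D : ℝ, 0 < C ∧ 2 ≤ D ∧ ∀ δ : ℝ, 0 < δ → δ ≤ 1 →
      volume {z : (WI n → ℝ) × (Fin (n + 1) → ℝ) |
        δ ≤ ‖∫ s in (0 : ℝ)..1, innerInt n z.1 s * momentChar z.2 s‖} ≤
      ENNReal.ofReal (C * log (D / δ) * δ⁻¹ ^ ((n + 3).choose 3 + 2)) := by
  obtain ⟨C, D, hC, hD, h⟩ := exists_volume_scale_le hn
  set κ := (8 * (n + 1)) ^ ((n + 3).choose 3 + 2) with hκ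
  have hκ2 : 2 ≤ κ := le_self_pow₀ (show 1 ≤ 8 * (n + 1) by omega) (by omega : _ ≠ 0) |>.trans'
    (by omega)
  set A := 8 * (n + 1) * κ with hA
  have hApos : 0 < A := by positivity
  refine ⟨A ^ (n + 1) * C * (1 - (8 * (n + 1) : ℝ)⁻¹)⁻¹, D, ?_, hD, fun δ hδ hδ1 => ?_⟩
  · have : (8 * (n + 1) : ℝ)⁻¹ < 1 := inv_lt_one_of_one_lt₀ (by
      have : (0 : ℝ) ≤ n := n.cast_nonneg
      linarith)
    have : 0 < 1 - (8 * (n + 1) : ℝ)⁻¹ := by linarith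
    positivity
  set B : (m : ℕ) → Fin (A ^ m) × (Fin (n + 1) → Fin A) →
      Set ((WI n → ℝ) × (Fin (n + 1) → ℝ)) := fun m p =>
    {z | (∀ i i', i < i' → (p.2 i : ℕ) + 2 ≤ p.2 i') ∧
      ∀ i, δ / (8 * (8 * (n + 1) * κ)) / (8 * (n + 1)) ^ m ≤
        ‖scaleInt A (m + 1) (A * p.1 + p.2 i) (δ / 4 * κ ^ m) (innerInt n z.1)
          (momentChar z.2)‖} with hB
  have hsub : {z : (WI n → ℝ) × (Fin (n + 1) → ℝ) |
      δ ≤ ‖∫ s in (0 : ℝ)..1, innerInt n z.1 s * momentChar z.2 s‖} ⊆ ⋃ m, ⋃ p, B m p := by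
    intro z hz
    obtain ⟨m, j, hj, c, hc, hbc⟩ := exists_scale_forall_le_norm_scaleInt (f := innerInt n z.1)
      (w := momentChar z.2)
      ((continuous_innerInt n).comp (by fun_prop : Continuous fun s : ℝ => (z.1, s))).measurable
      (norm_innerInt_le_one n z.1)
      ((continuous_momentChar _).comp (by fun_prop : Continuous fun s : ℝ => (z.2, s))).measurable
      (fun s => (norm_ex _).le) (k := n + 1) (by omega) hκ2 hδ hz
    refine mem_iUnion.2 ⟨m, mem_iUnion.2 ⟨(⟨j, hj⟩, c), hc, fun i => ?_⟩⟩
    have := hbc i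
    rwa [Nat.cast_add_one] at this
  have hpos : 0 ≤ log (D / δ) := log_nonneg (by
    rw [le_div_iff₀ hδ]
    linarith)
  set K := C * log (D / δ) * δ⁻¹ ^ ((n + 3).choose 3 + 2) with hK
  have hK0 : 0 ≤ K := by positivity
  have hBvol : ∀ m p, volume (B m p) ≤ ENNReal.ofReal
      (K * (((8 * (n + 1) * κ : ℝ) ^ m)⁻¹ * (8 * (n + 1) : ℝ)⁻¹ ^ m)) := by
    intro m p
    by_cases hp : ∀ i i', i < i' → (p.2 i : ℕ) + 2 ≤ p.2 i'
    · refine (measure_mono fun z hz => hz.2).trans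
        (h κ hκ m (fun i => A * p.1 + p.2 i) δ hδ fun i i' hi => ?_)
      have := hp i i' hi
      omega
    · refine le_of_eq_of_le (measure_mono_null (t := ∅) (fun z hz => hp hz.1) measure_empty) zero_le
  have hscale : ∀ m, volume (⋃ p, B m p) ≤ ENNReal.ofReal
      (A ^ (n + 1) * K * (8 * (n + 1) : ℝ)⁻¹ ^ m) := by
    intro m
    refine (measure_iUnion_fintype_le _ _).trans ((Finset.sum_le_sum fun p _ =>
      hBvol m p).trans (le_of_eq ?_))
    rw [Finset.sum_const, Finset.card_univ, Fintype.card_prod, Fintype.card_fin, Fintype.card_fun,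
      Fintype.card_fin, Fintype.card_fin, ← ENNReal.ofReal_nsmul, nsmul_eq_mul]
    have hA' : (A : ℝ) = 8 * (n + 1) * κ := by
      rw [hA]
      push_cast
      rfl
    push_cast
    rw [← hA']
    congr 1
    have : (A : ℝ) ^ m ≠ 0 := by positivity
    field_simp
  refine (measure_mono hsub).trans ((measure_iUnion_le _).trans
    ((ENNReal.tsum_le_tsum hscale).trans (le_of_eq ?_)))
  have hr0 : (0 : ℝ) ≤ (8 * (n + 1) : ℝ)⁻¹ := by positivity
  have hr1 : (8 * (n + 1) : ℝ)⁻¹ < 1 := inv_lt_one_of_one_lt₀ (by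
    have : (0 : ℝ) ≤ n := n.cast_nonneg
    linarith)
  rw [← ENNReal.ofReal_tsum_of_nonneg (fun m => by positivity)
    ((summable_geometric_of_lt_one hr0 hr1).mul_left _), tsum_mul_left,
    tsum_geometric_of_lt_one hr0 hr1, hK]
  congr 1
  ring

section Coordinates

/-- The exponents of `(ξ₁, ξ₂)` in the monomial of `topPoly k n` with a given coefficient. -/
def expWI (k : ℕ) : ∀ n, WI n → ℕ × ℕ
  | 0, _ => (0, k)
  | n + 1, Sum.inl a => expWI k n a
  | n + 1, Sum.inr j => (j, k - (n + 1))

lemma eval_topPoly (k n : ℕ) (x : WI n → ℝ) (s t : ℝ) :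
    (topPoly k n x s).eval t = ∑ a, x a * s ^ (expWI k n a).1 * t ^ (expWI k n a).2 := by
  induction n with
  | zero =>
    have : ∑ a : WI 0, x a * s ^ (expWI k 0 a).1 * t ^ (expWI k 0 a).2 =
        ∑ a : Fin 1, x a * s ^ 0 * t ^ k := rfl
    rw [this, topPoly]
    simp
  | succ n ih =>
    have : ∑ a : WI (n + 1), x a * s ^ (expWI k (n + 1) a).1 * t ^ (expWI k (n + 1) a).2 =
        ∑ a : WI n ⊕ Fin (n + 2),
          x a * s ^ (expWI k (n + 1) a).1 * t ^ (expWI k (n + 1) a).2 := rfl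
    rw [this, Fintype.sum_sum_type, topPoly, Polynomial.eval_add, ih]
    congr 1
    simp only [Polynomial.eval_mul, Polynomial.eval_C, Polynomial.eval_pow, Polynomial.eval_X,
      Finset.sum_mul]
    rfl

lemma expWI_bounds {k n : ℕ} (hn : n ≤ k) (a : WI n) :
    k - n ≤ (expWI k n a).2 ∧ (expWI k n a).1 + (expWI k n a).2 ≤ k := by
  induction n with
  | zero => exact ⟨le_rfl, by simp [expWI]⟩
  | succ n ih =>
    rcases a with a | j
    · have := ih (by omega) a
      exact ⟨by simp only [expWI]; omega, by simp only [expWI]; omega⟩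
    · have := j.2
      exact ⟨by simp only [expWI]; omega, by simp only [expWI]; omega⟩

lemma injective_expWI {k n : ℕ} (hn : n ≤ k) : Function.Injective (expWI k n) := by
  induction n with
  | zero => exact fun a b _ => Subsingleton.elim (α := Fin 1) a b
  | succ n ih =>
    rintro (a | j) (b | l) h
    · exact congrArg Sum.inl (ih (by omega) h)
    · have := (expWI_bounds (k := k) (by omega) a).1
      have h2 := congrArg Prod.snd h
      simp only [expWI] at h2
      omega
    · have := (expWI_bounds (k := k) (by omega) b).1
      have h2 := congrArg Prod.snd h
      simp only [expWI] at h2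
      omega
    · have h1 := congrArg Prod.fst h
      simp only [expWI] at h1
      exact congrArg Sum.inr (Fin.ext h1)

lemma exists_expWI_eq {k n : ℕ} (hn : n ≤ k) {p : ℕ × ℕ} (h1 : k - n ≤ p.2)
    (h2 : p.1 + p.2 ≤ k) : ∃ a, expWI k n a = p := by
  induction n with
  | zero => exact ⟨(0 : Fin 1), Prod.ext (by simp only [expWI]; omega) (by simp only [expWI]; omega)⟩
  | succ n ih =>
    by_cases h : k - n ≤ p.2
    · obtain ⟨a, ha⟩ := ih (by omega) h
      exact ⟨Sum.inl a, ha⟩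
    · exact ⟨Sum.inr ⟨p.1, by omega⟩, Prod.ext rfl (by simp only [expWI]; omega)⟩

/-- The exponents in the monomials of a phase, those independent of `ξ₂` coming last. -/
def phaseExp (n : ℕ) : WI n ⊕ Fin (n + 1) → ℕ × ℕ :=
  Sum.elim (expWI (n + 1) n) fun j => (j + 1, 0)

lemma phaseExp_bounds {n : ℕ} (a : WI n ⊕ Fin (n + 1)) :
    1 ≤ (phaseExp n a).1 + (phaseExp n a).2 ∧ (phaseExp n a).1 + (phaseExp n a).2 ≤ n + 1 := by
  rcases a with a | j
  · have := expWI_bounds (k := n + 1) (by omega) a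
    exact ⟨by simp only [phaseExp, Sum.elim_inl]; omega, this.2⟩
  · have := j.2
    exact ⟨by simp [phaseExp], by simp only [phaseExp, Sum.elim_inr]; omega⟩

lemma injective_phaseExp (n : ℕ) : Function.Injective (phaseExp n) := by
  rintro (a | j) (b | l) h
  · exact congrArg Sum.inl (injective_expWI (Nat.le_succ n) h)
  · have := (expWI_bounds (k := n + 1) (by omega) a).1
    have h2 := congrArg Prod.snd h
    simp only [phaseExp, Sum.elim_inl, Sum.elim_inr] at h2
    omega
  · have := (expWI_bounds (k := n + 1) (by omega) b).1
    have h2 := congrArg Prod.snd h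
    simp only [phaseExp, Sum.elim_inl, Sum.elim_inr] at h2
    omega
  · have h1 := congrArg Prod.fst h
    simp only [phaseExp, Sum.elim_inr, Nat.add_right_cancel_iff] at h1
    exact congrArg Sum.inr (Fin.ext h1)

/-- The indexing of the monomials of a phase by `WI n ⊕ Fin (n + 1)`. -/
def phaseEquiv (n : ℕ) : WI n ⊕ Fin (n + 1) ≃ Idx (n + 1) :=
  Equiv.ofBijective (fun a => ⟨(⟨(phaseExp n a).1, by have := (phaseExp_bounds a).2; omega⟩,
    ⟨(phaseExp n a).2, by have := (phaseExp_bounds a).2; omega⟩), phaseExp_bounds a⟩) <| by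
    refine ⟨fun a b h => injective_phaseExp n ?_, fun β => ?_⟩
    · have := congrArg Subtype.val h
      simp only [Prod.mk.injEq, Fin.mk.injEq] at this
      exact Prod.ext this.1 this.2
    · have hβ := β.2
      rcases Nat.eq_zero_or_pos (β.1.2 : ℕ) with h | h
      · refine ⟨Sum.inr ⟨β.1.1 - 1, by have := β.1.1.2; omega⟩, Subtype.ext (Prod.ext
          (Fin.ext ?_) (Fin.ext ?_))⟩
        · simp only [phaseExp, Sum.elim_inr]; omega
        · simp only [phaseExp, Sum.elim_inr]; omega
      · obtain ⟨a, ha⟩ := exists_expWI_eq (k := n + 1) (n := n) (by omega)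
          (p := ((β.1.1 : ℕ), (β.1.2 : ℕ))) (by simp only; omega) hβ.2
        refine ⟨Sum.inl a, Subtype.ext (Prod.ext (Fin.ext ?_) (Fin.ext ?_))⟩
        · simp [phaseExp, ha]
        · simp [phaseExp, ha]

/-- Coordinates on the space of phases separating the coefficients of the monomials independent
of `ξ₂`. -/
def phaseCoord (n : ℕ) : (WI n → ℝ) × (Fin (n + 1) → ℝ) ≃ᵐ (Idx (n + 1) → ℝ) :=
  (MeasurableEquiv.sumPiEquivProdPi fun _ : WI n ⊕ Fin (n + 1) => ℝ).symm.trans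
    (MeasurableEquiv.piCongrLeft (fun _ => ℝ) (phaseEquiv n))

lemma measurePreserving_phaseCoord (n : ℕ) : MeasurePreserving (phaseCoord n) :=
  (volume_measurePreserving_piCongrLeft (fun _ => ℝ) (phaseEquiv n)).comp
    (volume_measurePreserving_sumPiEquivProdPi_symm fun _ : WI n ⊕ Fin (n + 1) => ℝ)

lemma phaseCoord_apply {n : ℕ} (z : (WI n → ℝ) × (Fin (n + 1) → ℝ)) (a : WI n ⊕ Fin (n + 1)) :
    phaseCoord n z (phaseEquiv n a) = Sum.elim z.1 z.2 a := by
  refine (MeasurableEquiv.piCongrLeft_apply_apply (β := fun _ => ℝ) (phaseEquiv n) _ a).trans ?_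
  rcases a with a | j <;> rfl

lemma Pphase_phaseCoord {n : ℕ} (z : (WI n → ℝ) × (Fin (n + 1) → ℝ)) (ξ : Fin 2 → ℝ) :
    Pphase (n + 1) (phaseCoord n z) ξ = (topPoly (n + 1) n z.1 (ξ 0)).eval (ξ 1) +
      ∑ j : Fin (n + 1), z.2 j * ξ 0 ^ ((j : ℕ) + 1) := by
  rw [Pphase, ← (phaseEquiv n).sum_comp, Fintype.sum_sum_type, eval_topPoly]
  simp only [phaseCoord_apply, Sum.elim_inl, Sum.elim_inr]
  congr 1
  exact Finset.sum_congr rfl fun j _ =>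
    (show z.2 j * ξ 0 ^ ((j : ℕ) + 1) * ξ 1 ^ 0 = _ by rw [pow_zero, mul_one])

lemma integral_Icc_fin_two {F : ℝ → ℝ → ℂ} (hF : Continuous fun q : ℝ × ℝ => F q.1 q.2) :
    ∫ ξ in Icc (0 : Fin 2 → ℝ) 1, F (ξ 0) (ξ 1) = ∫ s in (0 : ℝ)..1, ∫ t in (0 : ℝ)..1, F s t := by
  have hpre : Icc (0 : Fin 2 → ℝ) 1 =
      MeasurableEquiv.finTwoArrow ⁻¹' (Icc (0 : ℝ) 1 ×ˢ Icc (0 : ℝ) 1) := by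
    ext ξ
    simp [Pi.le_def, Fin.forall_fin_two, MeasurableEquiv.finTwoArrow]
  have h := (volume_preserving_finTwoArrow ℝ).setIntegral_preimage_emb
    (MeasurableEquiv.measurableEmbedding _) (fun q : ℝ × ℝ => F q.1 q.2)
    (Icc (0 : ℝ) 1 ×ˢ Icc (0 : ℝ) 1)
  rw [← hpre] at h
  refine h.trans ?_
  rw [Measure.volume_eq_prod, setIntegral_prod _
    (hF.continuousOn.integrableOn_compact (isCompact_Icc.prod isCompact_Icc))]
  simp only [intervalIntegral.integral_of_le zero_le_one, integral_Icc_eq_integral_Ioc]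

lemma Eone_phaseCoord {n : ℕ} (z : (WI n → ℝ) × (Fin (n + 1) → ℝ)) :
    Eone (n + 1) (phaseCoord n z) =
      ∫ s in (0 : ℝ)..1, innerInt n z.1 s * momentChar z.2 s := by
  have hF : Continuous fun q : ℝ × ℝ =>
      ex ((topPoly (n + 1) n z.1 q.1).eval q.2) * momentChar z.2 q.1 := by
    refine (continuous_ex.comp ?_).mul ((continuous_momentChar _).comp
      (by fun_prop : Continuous fun q : ℝ × ℝ => (z.2, q.1)))
    exact (continuous_eval_iterate_derivative_topPoly (n + 1) n 0).comp
      (by fun_prop : Continuous fun q : ℝ × ℝ => ((z.1, q.1), q.2))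
  have h := integral_Icc_fin_two (F := fun s t =>
    ex ((topPoly (n + 1) n z.1 s).eval t) * momentChar z.2 s) hF
  simp only [intervalIntegral.integral_mul_const] at h
  refine Eq.trans ?_ h
  refine integral_congr_ae (ae_of_all _ fun ξ => ?_)
  simp only
  rw [momentChar, ← ex_add, ← Pphase_phaseCoord, ex]

end Coordinates

/-- Level set estimate (Section 3): for every `k ≥ 2` there is `C_k < ∞` with
`|{x ∈ ℝ^N : δ ≤ |E_k1(x)| ≤ 2δ}| ≤ C_k (log₊ δ)^{k−1} δ^{−q_k}` for all `δ ∈ (0,1]`,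
where `log₊ δ = log(1 + 1/δ)` and `q_k = k(k+1)(k+2)/6 + 2`. -/
theorem level_set_estimate (k : ℕ) (hk : 2 ≤ k) :
    ∃ C : ℝ, 0 ≤ C ∧
      ∀ δ : ℝ, 0 < δ → δ ≤ 1 →
        volume {x : Idx k → ℝ | δ ≤ ‖Eone k x‖ ∧ ‖Eone k x‖ ≤ 2 * δ} ≤
          ENNReal.ofReal (C * Real.log (1 + 1 / δ) ^ (k - 1) *
            δ ^ (-((k : ℝ) * (k + 1) * (k + 2) / 6 + 2))) := by
  obtain ⟨n, rfl⟩ : ∃ n, k = n + 1 := ⟨k - 1, by omega⟩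
  have hn : 1 ≤ n := by omega
  obtain ⟨C, D, hC, hD, h⟩ := exists_volume_le_norm_integral_innerInt_le hn
  have hD0 : 0 ≤ log D := log_nonneg (by linarith)
  have h2 : 0 < log 2 := log_pos one_lt_two
  refine ⟨C * ((log D / log 2 + 1) * (log 2)⁻¹ ^ (n - 1)), by positivity, fun δ hδ hδ1 => ?_⟩
  have hexp : δ ^ (-(((n + 1 : ℕ) : ℝ) * ((n + 1 : ℕ) + 1) * ((n + 1 : ℕ) + 2) / 6 + 2)) =
      δ⁻¹ ^ ((n + 3).choose 3 + 2) := by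
    have hch : (((n + 3).choose 3 : ℕ) : ℝ) = (n + 3) * (n + 2) * (n + 1) / 6 := by
      rw [Nat.cast_choose_eq_descPochhammer_div]
      simp [descPochhammer_succ_right, Nat.factorial]
      ring
    rw [← rpow_natCast, inv_rpow hδ.le, ← rpow_neg hδ.le]
    congr 2
    push_cast
    rw [hch]
    ring
  calc volume {x : Idx (n + 1) → ℝ | δ ≤ ‖Eone (n + 1) x‖ ∧ ‖Eone (n + 1) x‖ ≤ 2 * δ}
      ≤ volume {x : Idx (n + 1) → ℝ | δ ≤ ‖Eone (n + 1) x‖} := measure_mono fun x hx => hx.1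
    _ = volume {z : (WI n → ℝ) × (Fin (n + 1) → ℝ) |
        δ ≤ ‖∫ s in (0 : ℝ)..1, innerInt n z.1 s * momentChar z.2 s‖} := by
      rw [← (measurePreserving_phaseCoord n).measure_preimage_equiv]
      simp only [preimage_ofPred_eq, Eone_phaseCoord]
    _ ≤ ENNReal.ofReal (C * log (D / δ) * δ⁻¹ ^ ((n + 3).choose 3 + 2)) := h δ hδ hδ1
    _ ≤ _ := by
      refine ENNReal.ofReal_le_ofReal ?_
      rw [hexp, Nat.add_sub_cancel]
      refine mul_le_mul_of_nonneg_right ?_ (by positivity)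
      exact (mul_le_mul_of_nonneg_left (log_div_le_mul_log_one_add_pow
        (show 1 ≤ D by linarith) hn hδ hδ1) hC.le).trans_eq (mul_assoc _ _ _).symm
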